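/- arXiv:2603.24884 — 3 statements merged into one kernel-verified Lean document; each statement's English description precedes it below -/
import Mathlib

section
/- For every integer n ≥ 2, the elements a, m, and g lie in OS_n^{S_n}, and the smallest ℚ-subalgebra of OS_n containing a, m, and g equals OS_n^{S_n}; that is, every S_n-invariant element of OS_n is a ℚ-polynomial expression in a, m, and g. -/
noncomputable section

/-- Unordered pairs of distinct elements of `{1, …, n+1}` (as `Fin (n+1)`). -/
abbrev OSidx (n : ℕ) := {s : Sym2 (Fin (n+1)) // ¬ s.IsDiag}

/-- The exterior algebra over `ℚ` on generators indexed by unordered pairs of distinct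
elements of `{1, …, n+1}`. -/
abbrev OSamb (n : ℕ) := ExteriorAlgebra ℚ (OSidx n →₀ ℚ)

/-- The generator `e_{ij} = e_{ji}` of the ambient exterior algebra. -/
def eAmb (n : ℕ) (i j : Fin (n+1)) (h : i ≠ j) : OSamb n :=
  ExteriorAlgebra.ι ℚ (Finsupp.single ⟨s(i,j), by simp [Sym2.mk_isDiag_iff, h]⟩ 1)

/-- The Orlik–Solomon relations for the braid arrangement. -/
inductive OSRel (n : ℕ) : OSamb n → OSamb n → Prop
  | rel (i j k : Fin (n+1)) (hij : i ≠ j) (hjk : j ≠ k) (hik : i ≠ k) :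
      OSRel n (eAmb n i k hik * eAmb n j k hjk - eAmb n i j hij * eAmb n j k hjk
        + eAmb n i j hij * eAmb n i k hik) 0

/-- The Orlik–Solomon algebra `OS_n` of the braid arrangement `A_n`. -/
abbrev OS (n : ℕ) := RingQuot (OSRel n)

/-- The generator `e_{ij}` of `OS_n`, defined to be `0` when `i = j`. -/
def eOS (n : ℕ) (i j : Fin (n+1)) : OS n :=
  if h : i = j then 0 else RingQuot.mkAlgHom ℚ (OSRel n) (eAmb n i j h)

/-- `a = Σ_{1 ≤ i < j ≤ n} e_{ij}`. -/
def aOS (n : ℕ) : OS n :=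
  ∑ p ∈ Finset.univ.filter (fun p : Fin n × Fin n => p.1 < p.2),
    eOS n p.1.castSucc p.2.castSucc

/-- `m = Σ_{1 ≤ i ≤ n} e_{i,n+1}`. -/
def mOS (n : ℕ) : OS n := ∑ i : Fin n, eOS n i.castSucc (Fin.last n)

/-- `c = Σ_{1 ≤ i < j ≤ n} (e_{ij} e_{i,n+1} + e_{ij} e_{j,n+1})`. -/
def cOS (n : ℕ) : OS n :=
  ∑ p ∈ Finset.univ.filter (fun p : Fin n × Fin n => p.1 < p.2),
    (eOS n p.1.castSucc p.2.castSucc * eOS n p.1.castSucc (Fin.last n)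
      + eOS n p.1.castSucc p.2.castSucc * eOS n p.2.castSucc (Fin.last n))

/-- `g = a·m − p·c` with `p = ⌊(n+1)/2⌋`. -/
def gOS (n : ℕ) : OS n := aOS n * mOS n - ((n+1)/2 : ℕ) • cOS n

/-- The action of a permutation on the index set of unordered pairs. -/
def OSpermIdx (n : ℕ) (σ : Equiv.Perm (Fin (n+1))) : OSidx n → OSidx n :=
  fun s => ⟨Sym2.map σ s.1, by
    obtain ⟨⟨x, y⟩, hs⟩ := s
    intro hd
    rw [Sym2.map_pair_eq, Sym2.mk_isDiag_iff] at hd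
    exact hs (Sym2.mk_isDiag_iff.mpr (σ.injective hd))⟩

/-- The algebra endomorphism of the ambient exterior algebra induced by a permutation. -/
def OSpermAmb (n : ℕ) (σ : Equiv.Perm (Fin (n+1))) : OSamb n →ₐ[ℚ] OSamb n :=
  ExteriorAlgebra.lift ℚ
    ⟨(ExteriorAlgebra.ι ℚ).comp (Finsupp.lmapDomain ℚ ℚ (OSpermIdx n σ)),
      fun m => by simp [ExteriorAlgebra.ι_sq_zero]⟩

lemma OSpermAmb_e (n : ℕ) (σ : Equiv.Perm (Fin (n+1))) (i j : Fin (n+1)) (h : i ≠ j) :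
    OSpermAmb n σ (eAmb n i j h) = eAmb n (σ i) (σ j) (fun hh => h (σ.injective hh)) := by
  simp only [OSpermAmb, eAmb, ExteriorAlgebra.lift_ι_apply, LinearMap.comp_apply,
    Finsupp.lmapDomain_apply, Finsupp.mapDomain_single]
  congr 1

/-- The algebra endomorphism of `OS_n` induced by a permutation of `{1, …, n+1}`. -/
def OSperm (n : ℕ) (σ : Equiv.Perm (Fin (n+1))) : OS n →ₐ[ℚ] OS n :=
  RingQuot.liftAlgHom ℚ
    ⟨(RingQuot.mkAlgHom ℚ (OSRel n)).comp (OSpermAmb n σ), by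
      intro x y h
      cases h with
      | rel i j k hij hjk hik =>
        simp only [AlgHom.comp_apply, map_sub, map_add, map_mul, map_zero, OSpermAmb_e]
        have := RingQuot.mkAlgHom_rel ℚ (OSRel.rel (σ i) (σ j) (σ k)
          (fun hh => hij (σ.injective hh)) (fun hh => hjk (σ.injective hh))
          (fun hh => hik (σ.injective hh)))
        simpa [map_sub, map_add, map_mul] using this⟩

/-- The subalgebra of `S_n`-invariants of `OS_n`, where `S_n` is the subgroup of permutations
of `{1, …, n+1}` fixing `n+1`. -/
def OSinv (n : ℕ) : Subalgebra ℚ (OS n) where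
  carrier := {x | ∀ σ : Equiv.Perm (Fin (n+1)), σ (Fin.last n) = Fin.last n → OSperm n σ x = x}
  mul_mem' := fun hx hy σ hσ => by rw [map_mul, hx σ hσ, hy σ hσ]
  add_mem' := fun hx hy σ hσ => by rw [map_add, hx σ hσ, hy σ hσ]
  one_mem' := fun σ _ => map_one _
  zero_mem' := fun σ _ => map_zero _
  algebraMap_mem' := fun r σ hσ => AlgHom.commutes _ r

/-- The subalgebra of `S_{n+1}`-invariants of `OS_n`. -/
def OSinvFull (n : ℕ) : Subalgebra ℚ (OS n) where
  carrier := {x | ∀ σ : Equiv.Perm (Fin (n+1)), OSperm n σ x = x}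
  mul_mem' := fun hx hy σ => by rw [map_mul, hx σ, hy σ]
  add_mem' := fun hx hy σ => by rw [map_add, hx σ, hy σ]
  one_mem' := fun σ => map_one _
  zero_mem' := fun σ => map_zero _
  algebraMap_mem' := fun r σ => AlgHom.commutes _ r

/-- The degree-`d` graded piece of `OS_n`: the image in `OS_n` of the degree-`d` component of
the exterior algebra. -/
def OSdeg (n : ℕ) (d : ℕ) : Submodule ℚ (OS n) :=
  Submodule.map (RingQuot.mkAlgHom ℚ (OSRel n)).toLinearMap
    ((LinearMap.range (ExteriorAlgebra.ι ℚ : (OSidx n →₀ ℚ) →ₗ[ℚ] OSamb n)) ^ d)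

/-- The degree-`d` graded piece of the invariant subalgebra `OS_n^{S_n}`. -/
def OSinvDeg (n : ℕ) (d : ℕ) : Submodule ℚ (OS n) :=
  Subalgebra.toSubmodule (OSinv n) ⊓ OSdeg n d

/-!
Let `e i j` be the generators and `o` the distinguished vertex. Composing the norm of the stabilizer
of `o` with the projection modulo the subalgebra generated by `∑ e i j`, `∑ e i o` and
`∑ e i j * e i o` gives a linear map `Φ` that is invariant under the stabilizer, kills `1`, and
whose kernel is stable under left multiplication by these three elements. It is enough that any
such `Φ` vanishes.

The Arnold relation makes the product of two paths with a common first vertex the signed sum over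
the shuffles of their tails. In `Φ` all of these shuffles agree up to sign, so the product becomes
a multiple of a single path, with coefficient a Gaussian binomial at `q = -1`. Multiplying by
`∑ e i j * e i o` lengthens a path from `o` by two edges with the coefficient `[t + 2, 2]_{-1} ≠ 0`,
and multiplying by `∑ e i o` lengthens it by one edge with coefficient `1` if `t` is even. Hence `Φ`
kills every path from `o`, then, by means of `∑ e i j`, every path from `o` times one edge. The
algebra is spanned by the products of a path from `o` with monomials on the remaining vertices, and
there symmetry leaves only degrees zero and one.
-/

section Paths

variable {ι A : Type*} [Ring A]

/-- The defining relations of the Orlik–Solomon algebra of a braid arrangement, for a family `e`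
indexed by ordered pairs. The values `e i i`, which are not generators, are required to vanish. -/
structure BraidRelations (e : ι → ι → A) : Prop where
  symm : ∀ i j, e i j = e j i
  self : ∀ i, e i i = 0
  mul_self : ∀ i j, e i j * e i j = 0
  anticomm : ∀ i j k l, e i j * e k l = -(e k l * e i j)
  arnold : ∀ i j k, i ≠ j → j ≠ k → i ≠ k →
    e i k * e j k - e i j * e j k + e i j * e i k = 0

/-- The monomial `e i₀ i₁ * e i₁ i₂ * ⋯ * e iₖ₋₁ iₖ` of the path through the vertices
`[i₀, …, iₖ]`. -/
def path (e : ι → ι → A) (l : List ι) : A := (List.zipWith e l l.tail).prod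

variable {e : ι → ι → A}

@[simp] lemma path_nil : path e [] = 1 := rfl

@[simp] lemma path_singleton (i : ι) : path e [i] = 1 := rfl

lemma path_cons_cons (i j : ι) (l : List ι) : path e (i :: j :: l) = e i j * path e (j :: l) := by
  simp [path]

lemma path_pair (i j : ι) : path e [i, j] = e i j := by simp [path]

lemma path_append_cons (s : List ι) (i : ι) (t : List ι) :
    path e (s ++ i :: t) = path e (s ++ [i]) * path e (i :: t) := by
  induction s with
  | nil => simp
  | cons a s ih =>
    cases s with
    | nil => simp [path_cons_cons]
    | cons b s => simp only [List.cons_append, path_cons_cons, mul_assoc] at ih ⊢; rw [ih]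

namespace BraidRelations

lemma star_mul_star (he : BraidRelations e) (r a b : ι) :
    e r a * e r b = e r a * e a b - e r b * e a b := by
  rcases eq_or_ne a b with rfl | hab
  · simp [he.mul_self]
  rcases eq_or_ne r a with rfl | hra
  · simp [he.self, he.mul_self]
  rcases eq_or_ne r b with rfl | hrb
  · simp [he.self, he.symm a r, he.mul_self]
  · rw [← sub_eq_zero, ← he.arnold r a b hra hab hrb]
    abel

lemma edge_mul_path_comm (he : BraidRelations e) (i j : ι) (l : List ι) :
    e i j * path e l = (-1 : ℤ) ^ (l.length - 1) • (path e l * e i j) := by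
  induction l with
  | nil => simp
  | cons a l ih =>
    cases l with
    | nil => simp
    | cons b l =>
      rw [path_cons_cons, ← mul_assoc, he.anticomm, neg_mul, mul_assoc, ih]
      simp only [List.length_cons, Nat.add_sub_cancel, pow_succ, mul_neg_one, neg_smul,
        mul_smul_comm, mul_assoc]

lemma path_mul_edge_comm (he : BraidRelations e) (i j : ι) (l : List ι) :
    path e l * e i j = (-1 : ℤ) ^ (l.length - 1) • (e i j * path e l) := by
  rw [he.edge_mul_path_comm, smul_smul, ← mul_pow]
  simp

lemma edge_mul_path_eq_zero_of_mem_tail (he : BraidRelations e) {i j : ι} {u : List ι}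
    (hj : j ∈ u) : e i j * path e (i :: u) = 0 := by
  induction u generalizing i with
  | nil => simp at hj
  | cons a u ih =>
    rw [path_cons_cons, ← mul_assoc]
    rcases List.mem_cons.mp hj with rfl | hj
    · simp [he.mul_self]
    · rw [he.star_mul_star, sub_mul, mul_assoc, mul_assoc, he.symm j a, ih hj]
      simp

lemma edge_mul_path_eq_zero (he : BraidRelations e) {i j : ι} {l : List ι}
    (hi : i ∈ l) (hj : j ∈ l) : e i j * path e l = 0 := by
  induction l with
  | nil => simp at hi
  | cons a l ih =>
    rcases List.mem_cons.mp hi with rfl | hil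
    · rcases List.mem_cons.mp hj with rfl | hjl
      · simp [he.self]
      · exact he.edge_mul_path_eq_zero_of_mem_tail hjl
    rcases List.mem_cons.mp hj with rfl | hjl
    · rw [he.symm]
      exact he.edge_mul_path_eq_zero_of_mem_tail hil
    · obtain ⟨b, l, rfl⟩ := List.exists_cons_of_ne_nil (List.ne_nil_of_mem hil)
      rw [path_cons_cons, ← mul_assoc, he.anticomm, neg_mul, mul_assoc, ih hil hjl]
      simp

lemma path_mul_path_cons (he : BraidRelations e) (r a b : ι) (u v : List ι) :
    path e (r :: a :: u) * path e (r :: b :: v) =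
      e r a * (path e (a :: u) * path e (a :: b :: v)) +
        (-1 : ℤ) ^ (u.length + 1) • (e r b * (path e (b :: a :: u) * path e (b :: v))) := by
  simp only [path_cons_cons]
  have comm (i j : ι) : path e (a :: u) * (e i j * path e (b :: v)) =
      (-1 : ℤ) ^ u.length • (e i j * (path e (a :: u) * path e (b :: v))) := by
    rw [← mul_assoc, he.path_mul_edge_comm, smul_mul_assoc, mul_assoc]
    simp
  calc e r a * path e (a :: u) * (e r b * path e (b :: v))
      = (-1 : ℤ) ^ u.length • (e r a * e r b * (path e (a :: u) * path e (b :: v))) := by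
        rw [mul_assoc, comm, mul_smul_comm, mul_assoc]
    _ = (-1 : ℤ) ^ u.length • (e r a * (e a b * (path e (a :: u) * path e (b :: v)))) +
          (-1 : ℤ) ^ (u.length + 1) •
            (e r b * (e a b * (path e (a :: u) * path e (b :: v)))) := by
        rw [he.star_mul_star, sub_mul, smul_sub, pow_succ, mul_neg_one, neg_smul, sub_eq_add_neg,
          mul_assoc, mul_assoc]
    _ = _ := by
        rw [comm, mul_smul_comm, he.symm b a, mul_assoc]

end BraidRelations

end Paths

section SignedShuffles

/-- The sum of the signs of the `(s, t)`-shuffles, that is, the Gaussian binomial coefficient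
`[s + t, s]_q` at `q = -1`. -/
def signedShuffles : ℕ → ℕ → ℤ
  | 0, _ => 1
  | _ + 1, 0 => 1
  | s + 1, t + 1 => signedShuffles s (t + 1) + (-1) ^ (s + 1) * signedShuffles (s + 1) t

lemma signedShuffles_one_even (t : ℕ) : signedShuffles 1 (2 * t) = 1 := by
  induction t with
  | zero => simp [signedShuffles]
  | succ t ih => simp [Nat.mul_succ, signedShuffles, ih]

lemma signedShuffles_one_nonneg (t : ℕ) : 0 ≤ signedShuffles 1 t := by
  induction t using Nat.twoStepInduction with
  | zero => simp [signedShuffles]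
  | one => simp [signedShuffles]
  | more t ih _ => simpa [signedShuffles] using ih

lemma signedShuffles_two_pos (t : ℕ) : 0 < signedShuffles 2 t := by
  induction t with
  | zero => simp [signedShuffles]
  | succ t ih =>
    have pascal : signedShuffles 2 (t + 1) = signedShuffles 1 (t + 1) + signedShuffles 2 t := by
      rw [signedShuffles]
      simp
    linarith [signedShuffles_one_nonneg (t + 1)]

end SignedShuffles

section PermInvariantOn

variable {ι : Type*}

lemma exists_perm_map_eq {S : Set ι} {u v : List ι} (hu : u.Nodup) (hv : v.Nodup)
    (huS : ∀ i ∈ u, i ∈ S) (hvS : ∀ i ∈ v, i ∈ S) (huv : u.length = v.length) :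
    ∃ σ : Equiv.Perm ι, (∀ i ∉ S, σ i = i) ∧ u.map σ = v := by
  classical
  let f : Fin u.length ↪ S := ⟨fun k ↦ ⟨u.get k, huS _ (u.get_mem k)⟩, fun k l h ↦
    hu.injective_get (congrArg Subtype.val h)⟩
  let g : Fin u.length ↪ S := ⟨fun k ↦ ⟨v.get (k.cast huv), hvS _ (v.get_mem _)⟩, fun k l h ↦
    Fin.cast_injective huv (hv.injective_get (congrArg Subtype.val h))⟩
  obtain ⟨σ, hσ⟩ := (Equiv.Perm.isMultiplyPretransitive S u.length).exists_smul_eq f g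
  refine ⟨Equiv.Perm.ofSubtype σ, fun i hi ↦ Equiv.Perm.ofSubtype_apply_of_not_mem σ hi, ?_⟩
  refine List.ext_get (by simpa using huv) fun k hk _ ↦ ?_
  have hk' : k < u.length := by simpa using hk
  have := congrArg Subtype.val (DFunLike.congr_fun hσ ⟨k, hk'⟩)
  simpa [f, g, Equiv.Perm.ofSubtype_apply_of_mem σ (huS _ (u.getElem_mem hk'))] using this

variable {K A M : Type*} [CommRing K] [Ring A] [Algebra K A] [AddCommGroup M] [Module K M]
  [MulSemiringAction (Equiv.Perm ι) A] {e : ι → ι → A} {S T : Set ι} {Φ : A →ₗ[K] M}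

/-- The permutations of the vertices act on the edges through their endpoints. -/
abbrev EdgeEquivariant {ι A : Type*} [SMul (Equiv.Perm ι) A] (e : ι → ι → A) : Prop :=
  ∀ (σ : Equiv.Perm ι) (i j : ι), σ • e i j = e (σ i) (σ j)

lemma smul_path (hperm : EdgeEquivariant e) (σ : Equiv.Perm ι) (l : List ι) :
    σ • path e l = path e (l.map σ) := by
  induction l with
  | nil => simp
  | cons i l ih =>
    cases l with
    | nil => simp
    | cons j l => simpa [path_cons_cons, hperm] using congrArg (e (σ i) (σ j) * ·) ih

/-- The linear map `Φ` is invariant under the permutations supported on `S`. -/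
def PermInvariantOn (S : Set ι) (Φ : A →ₗ[K] M) : Prop :=
  ∀ σ : Equiv.Perm ι, (∀ i ∉ S, σ i = i) → ∀ y, Φ (σ • y) = Φ y

namespace PermInvariantOn

lemma mono (hΦ : PermInvariantOn T Φ) (hST : S ⊆ T) : PermInvariantOn S Φ :=
  fun σ hσ ↦ hΦ σ fun i hi ↦ hσ i fun hiS ↦ hi (hST hiS)

lemma comp_mulLeft (hΦ : PermInvariantOn S Φ) {x : A}
    (hx : ∀ σ : Equiv.Perm ι, (∀ i ∉ S, σ i = i) → σ • x = x) :
    PermInvariantOn S (Φ ∘ₗ LinearMap.mulLeft K x) := fun σ hσ y ↦ by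
  simpa [hx σ hσ] using hΦ σ hσ (x * y)

lemma comp_mulRight (hΦ : PermInvariantOn S Φ) {x : A}
    (hx : ∀ σ : Equiv.Perm ι, (∀ i ∉ S, σ i = i) → σ • x = x) :
    PermInvariantOn S (Φ ∘ₗ LinearMap.mulRight K x) := fun σ hσ y ↦ by
  simpa [hx σ hσ] using hΦ σ hσ (y * x)

lemma comp_mulLeft_path (hperm : EdgeEquivariant e) (hΦ : PermInvariantOn S Φ) {l : List ι}
    (hl : ∀ i ∈ l, i ∉ S) :
    PermInvariantOn S (Φ ∘ₗ LinearMap.mulLeft K (path e l)) :=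
  hΦ.comp_mulLeft fun σ hσ ↦ by
    rw [smul_path hperm, List.map_congr_left fun i hi ↦ hσ i (hl i hi), List.map_id']

lemma map_path_append_eq (hperm : EdgeEquivariant e) (hΦ : PermInvariantOn S Φ) {s u v : List ι}
    (hs : ∀ i ∈ s, i ∉ S) (hu : u.Nodup) (hv : v.Nodup) (huS : ∀ i ∈ u, i ∈ S)
    (hvS : ∀ i ∈ v, i ∈ S) (huv : u.length = v.length) :
    Φ (path e (s ++ u)) = Φ (path e (s ++ v)) := by
  obtain ⟨σ, hσ, rfl⟩ := exists_perm_map_eq hu hv huS hvS huv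
  rw [← hΦ σ hσ, smul_path hperm, List.map_append,
    List.map_congr_left fun i hi ↦ hσ i (hs i hi), List.map_id']

/-- In `Φ`, a product of two paths with a common first vertex is a sum over the shuffles of their
tails, all of whose terms agree up to sign. -/
lemma map_path_mul_path (he : BraidRelations e) (hperm : EdgeEquivariant e) {r : ι} {u v : List ι}
    (hr : (r :: (u ++ v)).Nodup) (hΦ : PermInvariantOn {i | i ∈ u ++ v} Φ) :
    Φ (path e (r :: u) * path e (r :: v)) =
      signedShuffles u.length v.length • Φ (path e (r :: (u ++ v))) := by
  induction hN : u.length + v.length generalizing r u v Φ with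
  | zero =>
    obtain ⟨rfl, rfl⟩ : u = [] ∧ v = [] := by simpa using hN
    simp [signedShuffles]
  | succ N ih =>
    rcases u with - | ⟨a, u⟩
    · simp [signedShuffles]
    rcases v with - | ⟨b, v⟩
    · simp [signedShuffles]
    have left := ih (r := a) (u := u) (v := b :: v) (Φ := Φ ∘ₗ LinearMap.mulLeft K (e r a))
      (by grind) (path_pair (e := e) r a ▸ (hΦ.mono (by grind)).comp_mulLeft_path hperm (by grind))
      (by grind)
    have right := ih (r := b) (u := a :: u) (v := v) (Φ := Φ ∘ₗ LinearMap.mulLeft K (e r b))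
      (by grind) (path_pair (e := e) r b ▸ (hΦ.mono (by grind)).comp_mulLeft_path hperm (by grind))
      (by grind)
    have swap : Φ (path e (r :: b :: a :: (u ++ v))) = Φ (path e (r :: a :: (u ++ b :: v))) :=
      hΦ.map_path_append_eq hperm (s := [r]) (u := b :: a :: (u ++ v)) (by grind) (by grind)
        (by grind) (by grind) (by grind) (by grind)
    simp only [LinearMap.comp_apply, LinearMap.mulLeft_apply, List.cons_append,
      ← path_cons_cons] at left right
    rw [he.path_mul_path_cons, map_add, map_zsmul, left, right, swap, smul_smul, ← add_smul]
    simp only [List.length_cons, List.cons_append, signedShuffles]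

lemma map_path_eq_zero [IsAddTorsionFree M] (he : BraidRelations e) (hperm : EdgeEquivariant e)
    {r a b : ι} {v : List ι}
    (hl : (r :: a :: b :: v).Nodup) (hΦ : PermInvariantOn {i | i ∈ r :: a :: b :: v} Φ) :
    Φ (path e (r :: a :: b :: v)) = 0 := by
  have shuffle : Φ (path e [r, a, b] * path e (r :: v)) =
      signedShuffles 2 v.length • Φ (path e (r :: a :: b :: v)) :=
    (hΦ.mono (by grind)).map_path_mul_path he hperm (u := [a, b]) hl
  have reroot : path e [r, a, b] * path e (r :: v) = -path e (b :: a :: r :: v) := by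
    simp only [path_cons_cons, path_singleton, mul_one, mul_assoc, he.symm b a, he.symm a r]
    rw [← mul_assoc, he.anticomm, neg_mul, mul_assoc]
  have swap : Φ (path e (b :: a :: r :: v)) = Φ (path e (r :: a :: b :: v)) :=
    hΦ.map_path_append_eq hperm (s := []) (by grind) (by grind) (by grind) (by grind) (by grind)
      (by grind)
  rw [reroot, map_neg, swap, neg_eq_iff_add_eq_zero, add_comm, ← add_one_zsmul] at shuffle
  have := signedShuffles_two_pos v.length
  exact (smul_eq_zero_iff_right (by omega)).mp shuffle

end PermInvariantOn

end PermInvariantOn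

section EdgeAlgebra

variable {ι K A M : Type*} [CommRing K] [Ring A] [Algebra K A] [AddCommGroup M] [Module K M]
  {e : ι → ι → A}

lemma adjoin_toSubmodule_le_of_mul_mem {s : Set A} {N : Submodule K A} (one_mem : 1 ∈ N)
    (mul_mem : ∀ x ∈ s, N ≤ N.comap (LinearMap.mulLeft K x)) :
    Subalgebra.toSubmodule (Algebra.adjoin K s) ≤ N := by
  rw [Algebra.adjoin_eq_span, Submodule.span_le]
  intro x hx
  induction hx using Submonoid.closure_induction_left with
  | one => exact one_mem
  | mul_left x hx y _ hy => exact mul_mem x hx hy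

/-- The subalgebra generated by the edges between vertices in `S`. -/
def edgeAlgebra (K : Type*) {ι A : Type*} [CommRing K] [Ring A] [Algebra K A] (e : ι → ι → A)
    (S : Set ι) : Subalgebra K A :=
  Algebra.adjoin K (Set.image2 e S S)

variable {S : Set ι}

lemma edge_mem_edgeAlgebra {i j : ι} (hi : i ∈ S) (hj : j ∈ S) : e i j ∈ edgeAlgebra K e S :=
  Algebra.subset_adjoin (Set.mem_image2_of_mem hi hj)

lemma edgeAlgebra_empty : edgeAlgebra K e ∅ = ⊥ := by simp [edgeAlgebra]

lemma smul_eq_of_mem_edgeAlgebra [MulSemiringAction (Equiv.Perm ι) A]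
    [SMulCommClass (Equiv.Perm ι) K A]
    (hperm : EdgeEquivariant e) {σ : Equiv.Perm ι} (hσ : ∀ i ∈ S, σ i = i) {z : A}
    (hz : z ∈ edgeAlgebra K e S) : σ • z = z := by
  induction hz using Algebra.adjoin_induction with
  | mem x hx =>
    obtain ⟨i, hi, j, hj, rfl⟩ := hx
    rw [hperm, hσ i hi, hσ j hj]
  | algebraMap c => exact smul_algebraMap σ c
  | add x y _ _ hx hy => rw [smul_add, hx, hy]
  | mul x y _ _ hx hy => rw [smul_mul', hx, hy]

namespace BraidRelations

lemma edgeAlgebra_insert_le (he : BraidRelations e) (r : ι) (S : Set ι) :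
    Subalgebra.toSubmodule (edgeAlgebra K e (insert r S)) ≤
      Subalgebra.toSubmodule (edgeAlgebra K e S) ⊔
        Submodule.span K (Set.image2 (fun i z ↦ e r i * z) S (edgeAlgebra K e S)) := by
  set E := edgeAlgebra K e S
  set N := Subalgebra.toSubmodule E ⊔
    Submodule.span K (Set.image2 (fun i z ↦ e r i * z) S (E : Set A))
  have mem_N {z : A} (hz : z ∈ E) : z ∈ N := Submodule.mem_sup_left hz
  have edge_mul_mem_N {i : ι} (hi : i ∈ S) {z : A} (hz : z ∈ E) : e r i * z ∈ N :=
    Submodule.mem_sup_right (Submodule.subset_span (Set.mem_image2_of_mem hi hz))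
  have inner {p q : ι} (hp : p ∈ S) (hq : q ∈ S) : N ≤ N.comap (LinearMap.mulLeft K (e p q)) := by
    have hpq : e p q ∈ E := edge_mem_edgeAlgebra hp hq
    refine sup_le (fun z hz ↦ mem_N (mul_mem hpq hz)) (Submodule.span_le.mpr ?_)
    rintro _ ⟨i, hi, z, hz, rfl⟩
    suffices -(e r i * (e p q * z)) ∈ N by simpa [← mul_assoc, he.anticomm p q r i] using this
    exact neg_mem (edge_mul_mem_N hi (mul_mem hpq hz))
  have outer {q : ι} (hq : q ∈ S) : N ≤ N.comap (LinearMap.mulLeft K (e r q)) := by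
    refine sup_le (fun z hz ↦ edge_mul_mem_N hq hz) (Submodule.span_le.mpr ?_)
    rintro _ ⟨i, hi, z, hz, rfl⟩
    suffices e r q * (e q i * z) - e r i * (e q i * z) ∈ N by
      simpa [← mul_assoc, he.star_mul_star r q i, sub_mul] using this
    have hqi : e q i * z ∈ E := mul_mem (edge_mem_edgeAlgebra hq hi) hz
    exact sub_mem (edge_mul_mem_N hq hqi) (edge_mul_mem_N hi hqi)
  refine adjoin_toSubmodule_le_of_mul_mem (mem_N (one_mem E)) ?_
  rintro _ ⟨p, rfl | hp, q, rfl | hq, rfl⟩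
  · simp [he.self, Submodule.comap_zero]
  · exact outer hq
  · exact he.symm p q ▸ outer hp
  · exact inner hp hq

lemma edgeAlgebra_le_span_path (he : BraidRelations e) {r : ι} {S : Set ι} (hS : S.Finite)
    (hr : r ∈ S) :
    Subalgebra.toSubmodule (edgeAlgebra K e S) ≤
      Submodule.span K {y | ∃ u : List ι, (r :: u).Nodup ∧ (∀ i ∈ u, i ∈ S) ∧
        ∃ z ∈ edgeAlgebra K e (S \ {i | i ∈ r :: u}), path e (r :: u) * z = y} := by
  induction hn : S.ncard using Nat.strong_induction_on generalizing r S with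
  | _ n ih =>
  subst hn
  have decomp := he.edgeAlgebra_insert_le (K := K) r (S \ {r})
  rw [Set.insert_sdiff_self_of_mem hr] at decomp
  refine decomp.trans (sup_le (fun z hz ↦ ?_) (Submodule.span_le.mpr ?_))
  · exact Submodule.subset_span ⟨[], by simp, by simp, z, by simpa using hz, by simp⟩
  rintro _ ⟨i, hi, z, hz, rfl⟩
  have hz' := ih _ (Set.ncard_sdiff_singleton_lt_of_mem hr hS) (S := S \ {r}) hS.sdiff hi rfl hz
  refine (Submodule.mem_comap (f := LinearMap.mulLeft K (e r i))).mp
    (Submodule.span_le.mpr ?_ hz')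
  rintro _ ⟨u, hu, huS, w, hw, rfl⟩
  refine Submodule.subset_span ⟨i :: u, by grind, by grind, w, ?_, ?_⟩
  · convert hw using 2
    grind
  · simp [path_cons_cons, mul_assoc]

end BraidRelations

namespace PermInvariantOn

variable [MulSemiringAction (Equiv.Perm ι) A] [IsAddTorsionFree M] {Φ : A →ₗ[K] M}

lemma map_edge_mul_edge_eq_zero (he : BraidRelations e) (hperm : EdgeEquivariant e) {r s p q : ι}
    (hl : [r, s, p, q].Nodup) (hΦ : PermInvariantOn {r, s, p, q} Φ) :
    Φ (e r s * e p q) = 0 := by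
  obtain ⟨σ, hσ, h⟩ := exists_perm_map_eq (S := {r, s, p, q}) (v := [p, q, r, s]) hl (by grind)
    (by simp) (by simp) rfl
  simp only [List.map_cons, List.map_nil, List.cons.injEq] at h
  have swap : Φ (e r s * e p q) = -Φ (e r s * e p q) := calc
    Φ (e r s * e p q) = Φ (e p q * e r s) := by
      rw [← hΦ σ hσ, smul_mul', hperm, hperm, h.1, h.2.1, h.2.2.1, h.2.2.2.1]
    _ = -Φ (e r s * e p q) := by rw [he.anticomm, map_neg]
  exact self_eq_neg.mp swap

lemma map_edgeAlgebra_eq_zero [SMulCommClass (Equiv.Perm ι) K A] (he : BraidRelations e)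
    (hperm : EdgeEquivariant e) (hS : S.Finite) (hΦ : PermInvariantOn S Φ) (map_one : Φ 1 = 0)
    (map_edge : ∀ p ∈ S, ∀ q ∈ S, Φ (e p q) = 0) {x : A} (hx : x ∈ edgeAlgebra K e S) :
    Φ x = 0 := by
  induction hn : S.ncard using Nat.strong_induction_on generalizing S Φ x with
  | _ n ih =>
  subst hn
  obtain rfl | ⟨r, hr⟩ := S.eq_empty_or_nonempty
  · rw [edgeAlgebra_empty] at hx
    obtain ⟨c, rfl⟩ := Algebra.mem_bot.mp hx
    rw [Algebra.algebraMap_eq_smul_one, map_smul, map_one, smul_zero]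
  have vanish_of_ssubset {T : Set ι} (hT : T ⊂ S) {Ψ : A →ₗ[K] M} (hΨ : PermInvariantOn T Ψ)
      (hΨ_one : Ψ 1 = 0) (hΨ_edge : ∀ p ∈ T, ∀ q ∈ T, Ψ (e p q) = 0) {z : A}
      (hz : z ∈ edgeAlgebra K e T) : Ψ z = 0 :=
    ih _ (Set.ncard_lt_ncard hT hS) (hS.subset hT.subset) hΨ hΨ_one hΨ_edge hz rfl
  clear ih
  refine Submodule.span_le (p := LinearMap.ker Φ).mpr ?_ (he.edgeAlgebra_le_span_path hS hr hx)
  rintro _ ⟨u, hu, huS, z, hz, rfl⟩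
  have hT : S \ {i | i ∈ r :: u} ⊂ S := Set.sdiff_ssubset_left_iff.mpr ⟨r, hr, by simp⟩
  match u with
  | [] =>
    simpa only [SetLike.mem_coe, LinearMap.mem_ker, path_singleton, one_mul] using
      vanish_of_ssubset hT (hΦ.mono hT.subset) map_one (by grind) hz
  | [s] =>
    have hs : s ∈ S := huS s (by simp)
    refine vanish_of_ssubset hT (Ψ := Φ ∘ₗ LinearMap.mulLeft K (path e [r, s]))
      ((hΦ.mono hT.subset).comp_mulLeft_path hperm (by grind)) ?_ (fun p hp q hq ↦ ?_) hz
    · simpa [path_pair] using map_edge r hr s hs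
    obtain rfl | hpq := eq_or_ne p q
    · simp [he.self]
    · rw [LinearMap.comp_apply, LinearMap.mulLeft_apply, path_pair]
      exact (hΦ.mono (by grind)).map_edge_mul_edge_eq_zero he hperm (by grind)
  | a :: b :: v =>
    refine map_path_eq_zero (Φ := Φ ∘ₗ LinearMap.mulRight K z) he hperm hu
      ((hΦ.mono (by grind)).comp_mulRight fun σ hσ ↦ ?_)
    exact smul_eq_of_mem_edgeAlgebra hperm (by grind) hz

end PermInvariantOn

end EdgeAlgebra

section Invariants

variable {ι K A M : Type*} [CommRing K] [Ring A] [Algebra K A] [AddCommGroup M]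
  [Module K M] {e : ι → ι → A} {o : ι}

lemma eq_zero_of_sum_eq_zero_of_forall_eq_zero_or_eq_zsmul [IsAddTorsionFree M] {κ : Type*}
    {s : Finset κ} {f : κ → M} {c : ℤ} (hc : c ≠ 0) {y : M} (hsum : ∑ k ∈ s, f k = 0)
    (hf : ∀ k ∈ s, f k = 0 ∨ f k = c • y) (hex : ∃ k ∈ s, f k = c • y) : y = 0 := by
  classical
  obtain ⟨k, hk, hky⟩ := hex
  have hsum' : ∑ k ∈ s, f k = (s.filter fun k ↦ f k = c • y).card • c • y := by
    rw [← Finset.sum_filter_add_sum_filter_not s fun k ↦ f k = c • y,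
      Finset.sum_congr rfl fun k hk ↦ (Finset.mem_filter.mp hk).2, Finset.sum_const,
      Finset.sum_eq_zero fun k hk ↦ ?_, add_zero]
    exact (hf k (Finset.mem_filter.mp hk).1).resolve_right (Finset.mem_filter.mp hk).2
  have hcard : (s.filter fun k ↦ f k = c • y).card ≠ 0 :=
    (Finset.card_pos.mpr ⟨k, Finset.mem_filter.mpr ⟨hk, hky⟩⟩).ne'
  rw [hsum', smul_eq_zero_iff_right hcard, smul_eq_zero_iff_right hc] at hsum
  exact hsum

lemma BraidRelations.cherry_mul_path_eq_zero (he : BraidRelations e) {p q : ι} {v : List ι}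
    (h : p = q ∨ p ∈ o :: v ∨ q ∈ o :: v) : e p q * e p o * path e (o :: v) = 0 := by
  obtain rfl | hp | hq := h
  · simp [he.self]
  · rw [mul_assoc, he.edge_mul_path_eq_zero hp (by simp), mul_zero]
  · rw [he.star_mul_star, sub_mul, mul_assoc, mul_assoc, he.edge_mul_path_eq_zero hq (by simp)]
    simp

namespace PermInvariantOn

variable [MulSemiringAction (Equiv.Perm ι) A] {Φ : A →ₗ[K] M}

lemma map_cherry_mul_path (he : BraidRelations e) (hperm : EdgeEquivariant e)
    (hΦ : PermInvariantOn {o}ᶜ Φ) {p q : ι} {v : List ι} (h : (o :: p :: q :: v).Nodup) :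
    Φ (e p q * e p o * path e (o :: v)) =
      -signedShuffles 2 v.length • Φ (path e (o :: p :: q :: v)) := by
  have reorder : e p q * e p o * path e (o :: v) = -(path e [o, p, q] * path e (o :: v)) := by
    rw [he.anticomm, he.symm p o, neg_mul, path_cons_cons, path_pair]
  rw [reorder, map_neg, (hΦ.mono (by grind)).map_path_mul_path he hperm (u := [p, q]) h, neg_smul]
  simp

lemma map_path_congr (hperm : EdgeEquivariant e) (hΦ : PermInvariantOn {o}ᶜ Φ) {u v : List ι}
    (hu : (o :: u).Nodup) (hv : (o :: v).Nodup)
    (huv : u.length = v.length) : Φ (path e (o :: u)) = Φ (path e (o :: v)) :=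
  hΦ.map_path_append_eq hperm (s := [o]) (by simp) hu.of_cons hv.of_cons (by grind) (by grind) huv

lemma map_edge_mul_path_eq_zero_of_mem (he : BraidRelations e) (hperm : EdgeEquivariant e)
    (hΦ : PermInvariantOn {o}ᶜ Φ)
    (map_path : ∀ u : List ι, (o :: u).Nodup → Φ (path e (o :: u)) = 0) {p q : ι} {u : List ι}
    (hu : (o :: u).Nodup) (hp : p ∈ o :: u) : Φ (e p q * path e (o :: u)) = 0 := by
  by_cases hq : q ∈ o :: u
  · rw [he.edge_mul_path_eq_zero hp hq, map_zero]
  obtain ⟨s, t, h⟩ := List.append_of_mem hp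
  have split : e p q * path e (o :: u) =
      (-1 : ℤ) ^ s.length • (path e (s ++ [p]) * (path e [p, q] * path e (p :: t))) := by
    rw [h, path_append_cons, ← mul_assoc, he.edge_mul_path_comm, path_pair]
    simp [mul_assoc]
  obtain ⟨w, hw⟩ : ∃ w, s ++ p :: q :: t = o :: w := by cases s <;> grind
  have inv : PermInvariantOn {i | i ∈ [q] ++ t}
      (Φ ∘ₗ LinearMap.mulLeft K (path e (s ++ [p]))) :=
    (hΦ.mono (by cases s <;> grind)).comp_mulLeft_path hperm (by grind)
  have shuffle := inv.map_path_mul_path he hperm (r := p) (by grind)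
  simp only [LinearMap.comp_apply, LinearMap.mulLeft_apply, List.singleton_append,
    ← path_append_cons, hw] at shuffle
  rw [split, map_zsmul, shuffle, map_path w (by grind), smul_zero, smul_zero]

end PermInvariantOn

section Fintype

variable [Fintype ι]

/-- The sum of all edges, each of them counted twice. -/
def edgeSum (e : ι → ι → A) : A := ∑ i, ∑ j, e i j

/-- The sum of the edges at the vertex `o`. -/
def starSum (e : ι → ι → A) (o : ι) : A := ∑ i, e i o

/-- The sum of the products `e i j * e i o` over all ordered pairs `(i, j)`. -/
def cherrySum (e : ι → ι → A) (o : ι) : A := ∑ i, ∑ j, e i j * e i o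

section smul

variable [MulSemiringAction (Equiv.Perm ι) A]

lemma smul_edgeSum (hperm : EdgeEquivariant e) (σ : Equiv.Perm ι) : σ • edgeSum e = edgeSum e := by
  simp only [edgeSum, Finset.smul_sum, hperm]
  rw [Equiv.sum_comp σ fun i ↦ ∑ j, e i (σ j)]
  exact Finset.sum_congr rfl fun i _ ↦ Equiv.sum_comp σ (e i)

lemma smul_starSum (hperm : EdgeEquivariant e) {σ : Equiv.Perm ι} (hσ : σ o = o) :
    σ • starSum e o = starSum e o := by
  simp only [starSum, Finset.smul_sum, hperm, hσ]
  exact Equiv.sum_comp σ fun i ↦ e i o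

lemma smul_cherrySum (hperm : EdgeEquivariant e) {σ : Equiv.Perm ι} (hσ : σ o = o) :
    σ • cherrySum e o = cherrySum e o := by
  simp only [cherrySum, Finset.smul_sum, smul_mul', hperm, hσ]
  rw [Equiv.sum_comp σ fun i ↦ ∑ j, e i (σ j) * e i o]
  exact Finset.sum_congr rfl fun i _ ↦ Equiv.sum_comp σ fun j ↦ e i j * e i o

end smul

namespace PermInvariantOn

variable [MulSemiringAction (Equiv.Perm ι) A] [IsAddTorsionFree M] {Φ : A →ₗ[K] M}

lemma map_path_eq_zero_of_even (he : BraidRelations e) (hperm : EdgeEquivariant e)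
    (hΦ : PermInvariantOn {o}ᶜ Φ) (map_one : Φ 1 = 0)
    (map_cherry : ∀ x, Φ x = 0 → Φ (cherrySum e o * x) = 0) {u : List ι}
    (hu : (o :: u).Nodup) (heven : Even u.length) : Φ (path e (o :: u)) = 0 := by
  induction hn : u.length using Nat.strong_induction_on generalizing u with
  | _ n ih =>
  subst hn
  match u with
  | [] => simpa using map_one
  | [_] => simp at heven
  | i :: j :: v =>
  have hv : Φ (path e (o :: v)) = 0 := ih v.length (by simp) (by grind) (by grind) rfl
  refine eq_zero_of_sum_eq_zero_of_forall_eq_zero_or_eq_zsmul (s := Finset.univ)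
    (f := fun k : ι × ι ↦ Φ (e k.1 k.2 * e k.1 o * path e (o :: v)))
    (c := -signedShuffles 2 v.length) (neg_ne_zero.mpr (signedShuffles_two_pos _).ne') ?_
    (fun k _ ↦ ?_) ⟨(i, j), Finset.mem_univ _, hΦ.map_cherry_mul_path he hperm hu⟩
  · rw [← map_cherry _ hv, cherrySum, Fintype.sum_prod_type]
    simp only [Finset.sum_mul, map_sum]
  by_cases hk : (o :: k.1 :: k.2 :: v).Nodup
  · rw [hΦ.map_cherry_mul_path he hperm hk, hΦ.map_path_congr hperm hk hu rfl]
    exact .inr rfl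
  · left
    rw [he.cherry_mul_path_eq_zero (by grind), map_zero]

lemma map_path_cons_eq_zero (he : BraidRelations e) (hperm : EdgeEquivariant e)
    (hΦ : PermInvariantOn {o}ᶜ Φ) (map_one : Φ 1 = 0)
    (map_star : ∀ x, Φ x = 0 → Φ (starSum e o * x) = 0)
    (map_cherry : ∀ x, Φ x = 0 → Φ (cherrySum e o * x) = 0) {u : List ι}
    (hu : (o :: u).Nodup) : Φ (path e (o :: u)) = 0 := by
  obtain heven | ⟨k, hk⟩ := u.length.even_or_odd
  · exact hΦ.map_path_eq_zero_of_even he hperm map_one map_cherry hu heven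
  obtain ⟨i, v, rfl⟩ := List.exists_cons_of_length_eq_add_one hk
  have hlen : v.length = 2 * k := by simpa using hk
  have hv : Φ (path e (o :: v)) = 0 :=
    hΦ.map_path_eq_zero_of_even he hperm map_one map_cherry (by grind) (hlen ▸ even_two_mul k)
  have insert_edge {p : ι} (hp : (o :: p :: v).Nodup) :
      Φ (e p o * path e (o :: v)) = (1 : ℤ) • Φ (path e (o :: p :: v)) := by
    rw [he.symm, ← path_pair (e := e),
      (hΦ.mono (by grind)).map_path_mul_path he hperm (u := [p]) hp, hlen]
    simp [signedShuffles_one_even]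
  refine eq_zero_of_sum_eq_zero_of_forall_eq_zero_or_eq_zsmul (s := Finset.univ)
    (f := fun p ↦ Φ (e p o * path e (o :: v))) one_ne_zero ?_
    (fun p _ ↦ ?_) ⟨i, Finset.mem_univ _, insert_edge hu⟩
  · rw [← map_star _ hv, starSum, Finset.sum_mul, map_sum]
  by_cases hp : (o :: p :: v).Nodup
  · rw [insert_edge hp, hΦ.map_path_congr hperm hp hu rfl]
    exact .inr rfl
  · left
    rw [he.edge_mul_path_eq_zero (by grind) (by simp), map_zero]

lemma map_edge_mul_path_eq_zero (he : BraidRelations e) (hperm : EdgeEquivariant e)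
    (hΦ : PermInvariantOn {o}ᶜ Φ)
    (map_path : ∀ u : List ι, (o :: u).Nodup → Φ (path e (o :: u)) = 0)
    (map_edge : ∀ x, Φ x = 0 → Φ (edgeSum e * x) = 0) {u : List ι} (hu : (o :: u).Nodup)
    (p q : ι) : Φ (e p q * path e (o :: u)) = 0 := by
  have of_mem {i j : ι} (h : i = j ∨ i ∈ o :: u ∨ j ∈ o :: u) :
      Φ (e i j * path e (o :: u)) = 0 := by
    obtain rfl | hi | hj := h
    · simp [he.self]
    · exact hΦ.map_edge_mul_path_eq_zero_of_mem he hperm map_path hu hi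
    · exact he.symm i j ▸ hΦ.map_edge_mul_path_eq_zero_of_mem he hperm map_path hu hj
  by_cases hpq : p = q ∨ p ∈ o :: u ∨ q ∈ o :: u
  · exact of_mem hpq
  refine eq_zero_of_sum_eq_zero_of_forall_eq_zero_or_eq_zsmul (s := Finset.univ)
    (f := fun k : ι × ι ↦ Φ (e k.1 k.2 * path e (o :: u))) one_ne_zero ?_
    (fun k _ ↦ ?_) ⟨(p, q), Finset.mem_univ _, (one_smul ℤ _).symm⟩
  · rw [← map_edge _ (map_path u hu), edgeSum, Fintype.sum_prod_type]
    simp only [Finset.sum_mul, map_sum]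
  by_cases hk : k.1 = k.2 ∨ k.1 ∈ o :: u ∨ k.2 ∈ o :: u
  · exact .inl (of_mem hk)
  right
  obtain ⟨σ, hσ, h⟩ := exists_perm_map_eq (S := {o}ᶜ) (u := p :: q :: u) (v := k.1 :: k.2 :: u)
    (by grind) (by grind) (by grind) (by grind) rfl
  simp only [List.map_cons, List.cons.injEq] at h
  rw [one_smul, ← hΦ σ hσ (e p q * _), smul_mul', hperm, smul_path hperm, List.map_cons, h.1, h.2.1,
    h.2.2, hσ o (by simp)]

lemma map_edgeAlgebra_univ_eq_zero [SMulCommClass (Equiv.Perm ι) K A] (he : BraidRelations e)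
    (hperm : EdgeEquivariant e) (hΦ : PermInvariantOn {o}ᶜ Φ) (map_one : Φ 1 = 0)
    (map_edge : ∀ x, Φ x = 0 → Φ (edgeSum e * x) = 0)
    (map_star : ∀ x, Φ x = 0 → Φ (starSum e o * x) = 0)
    (map_cherry : ∀ x, Φ x = 0 → Φ (cherrySum e o * x) = 0) {x : A}
    (hx : x ∈ edgeAlgebra K e Set.univ) : Φ x = 0 := by
  have map_path (u : List ι) (hu : (o :: u).Nodup) : Φ (path e (o :: u)) = 0 :=
    hΦ.map_path_cons_eq_zero he hperm map_one map_star map_cherry hu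
  refine Submodule.span_le (p := LinearMap.ker Φ).mpr ?_
    (he.edgeAlgebra_le_span_path Set.finite_univ (Set.mem_univ o) hx)
  rintro _ ⟨u, hu, -, z, hz, rfl⟩
  refine map_edgeAlgebra_eq_zero (Φ := Φ ∘ₗ LinearMap.mulLeft K (path e (o :: u))) he hperm
    (Set.toFinite _) ((hΦ.mono (by grind)).comp_mulLeft_path hperm (by grind)) ?_
    (fun p _ q _ ↦ ?_) hz
  · simpa using map_path u hu
  · rw [LinearMap.comp_apply, LinearMap.mulLeft_apply, he.path_mul_edge_comm, map_zsmul,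
      hΦ.map_edge_mul_path_eq_zero he hperm map_path map_edge hu, smul_zero]

end PermInvariantOn

end Fintype

end Invariants

section Norm

variable {G K A : Type*} [Group G] [Fintype G] [CommRing K] [Ring A] [Algebra K A]
  [MulSemiringAction G A] [SMulCommClass G K A]

lemma norm_mul_of_smul_eq {b : A} (hb : ∀ g : G, g • b = b) (y : A) :
    (Representation.ofDistribMulAction K G A).norm (b * y) =
      b * (Representation.ofDistribMulAction K G A).norm y := by
  simp [smul_mul', hb, Finset.mul_sum]

lemma norm_eq_card_smul_of_smul_eq {x : A} (hx : ∀ g : G, g • x = x) :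
    (Representation.ofDistribMulAction K G A).norm x = Fintype.card G • x := by
  simp [hx]

end Norm

lemma mem_fixedPoints_stabilizer {G α K A : Type*} [Group G] [MulAction G α] [CommRing K]
    [Ring A] [Algebra K A] [MulSemiringAction G A] [SMulCommClass G K A] {o : α} {x : A} :
    x ∈ FixedPoints.subalgebra K A (MulAction.stabilizer G o) ↔ ∀ g : G, g • o = o → g • x = x :=
  Subtype.forall

theorem BraidRelations.adjoin_eq_fixedPoints {ι K A : Type*} [Fintype ι] [Field K] [CharZero K]
    [Ring A] [Algebra K A] [MulSemiringAction (Equiv.Perm ι) A]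
    [SMulCommClass (Equiv.Perm ι) K A] {e : ι → ι → A} (he : BraidRelations e)
    (hperm : EdgeEquivariant e) (top : edgeAlgebra K e Set.univ = ⊤) (o : ι) :
    Algebra.adjoin K {edgeSum e, starSum e o, cherrySum e o} =
      FixedPoints.subalgebra K A (MulAction.stabilizer (Equiv.Perm ι) o) := by
  set G := MulAction.stabilizer (Equiv.Perm ι) o
  set s : Set A := {edgeSum e, starSum e o, cherrySum e o}
  set B := Algebra.adjoin K s
  have fixed {b : A} (hb : b ∈ s) (g : G) : g • b = b := by
    obtain rfl | rfl | rfl := hb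
    · exact smul_edgeSum hperm g.1
    · exact smul_starSum hperm g.2
    · exact smul_cherrySum hperm g.2
  refine le_antisymm (Algebra.adjoin_le fun b hb g ↦ fixed hb g) fun x hx ↦ ?_
  let _ : Fintype G := .ofFinite G
  have : IsAddTorsionFree (A ⧸ Subalgebra.toSubmodule B) := .of_isTorsionFree K _
  let Φ := (Subalgebra.toSubmodule B).mkQ ∘ₗ (Representation.ofDistribMulAction K G A).norm
  have map_eq_zero {y : A} :
      Φ y = 0 ↔ (Representation.ofDistribMulAction K G A).norm y ∈ B :=
    Submodule.Quotient.mk_eq_zero _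
  have inv : PermInvariantOn {o}ᶜ Φ := fun σ hσ y ↦ congrArg (Submodule.mkQ _)
    (Representation.norm_self_apply (Representation.ofDistribMulAction K G A)
      ⟨σ, hσ o (by simp)⟩ y)
  have map_one : Φ 1 = 0 := by
    rw [map_eq_zero, norm_eq_card_smul_of_smul_eq fun g ↦ smul_one g]
    exact nsmul_mem (one_mem B) _
  have map_mul {b : A} (hb : b ∈ s) (y : A) (hy : Φ y = 0) : Φ (b * y) = 0 := by
    rw [map_eq_zero, norm_mul_of_smul_eq (fixed hb)]
    exact mul_mem (Algebra.subset_adjoin hb) (map_eq_zero.mp hy)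
  have hΦx : Φ x = 0 := inv.map_edgeAlgebra_univ_eq_zero he hperm map_one (map_mul (by simp [s]))
    (map_mul (by simp [s])) (map_mul (by simp [s])) (top ▸ Algebra.mem_top)
  have card_smul : Fintype.card G • (Subalgebra.toSubmodule B).mkQ x = 0 := by
    rw [← map_nsmul, ← norm_eq_card_smul_of_smul_eq (K := K) hx]
    exact hΦx
  simpa using (smul_eq_zero_iff_right Fintype.card_ne_zero).mp card_smul

lemma sum_sum_eq_sum_lt {κ M : Type*} [Fintype κ] [LinearOrder κ] [AddCommMonoid M]
    {f : κ → κ → M} (hf : ∀ i, f i i = 0) :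
    ∑ i, ∑ j, f i j = ∑ p : κ × κ with p.1 < p.2, (f p.1 p.2 + f p.2 p.1) := by
  have split (i j : κ) :
      f i j = (if i < j then f i j else 0) + (if j < i then f i j else 0) := by
    rcases lt_trichotomy i j with h | rfl | h
    · simp [h, lt_asymm h]
    · simp [hf]
    · simp [h, lt_asymm h]
  rw [Finset.sum_filter, Fintype.sum_prod_type]
  simp only [ite_add_zero, Finset.sum_add_distrib]
  rw [Finset.sum_comm (f := fun i j ↦ if i < j then f j i else 0)]
  simp only [← Finset.sum_add_distrib, ← split]

lemma adjoin_mul_sub_smul_eq {K A : Type*} [Field K] [Ring A] [Algebra K A] {k l : K}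
    (hk : k ≠ 0) (hl : l ≠ 0) (a m c : A) :
    Algebra.adjoin K {a, m, a * m - k • c} = Algebra.adjoin K {l • (a + m), m, c} := by
  refine le_antisymm (Algebra.adjoin_le ?_) (Algebra.adjoin_le ?_)
  · set B := Algebra.adjoin K {l • (a + m), m, c}
    have hm : m ∈ B := Algebra.subset_adjoin (by simp)
    have hc : c ∈ B := Algebra.subset_adjoin (by simp)
    have ham : l • (a + m) ∈ B := Algebra.subset_adjoin (by simp)
    have ha : a ∈ B := by simpa [hl] using sub_mem (B.smul_mem ham l⁻¹) hm
    rintro _ (rfl | rfl | rfl)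
    exacts [ha, hm, sub_mem (mul_mem ha hm) (B.smul_mem hc k)]
  · set B := Algebra.adjoin K {a, m, a * m - k • c}
    have ha : a ∈ B := Algebra.subset_adjoin (by simp)
    have hm : m ∈ B := Algebra.subset_adjoin (by simp)
    have hg : a * m - k • c ∈ B := Algebra.subset_adjoin (by simp)
    have hc : c ∈ B := by simpa [hk] using B.smul_mem (sub_mem (mul_mem ha hm) hg) k⁻¹
    rintro _ (rfl | rfl | rfl)
    exacts [B.smul_mem (add_mem ha hm) l, hm, hc]

section OS

lemma mkAlgHom_eAmb {n : ℕ} {i j : Fin (n + 1)} (h : i ≠ j) :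
    RingQuot.mkAlgHom ℚ (OSRel n) (eAmb n i j h) = eOS n i j := by
  rw [eOS, dif_neg h]

lemma eOS_self (n : ℕ) (i : Fin (n + 1)) : eOS n i i = 0 := dif_pos rfl

lemma braidRelations_eOS (n : ℕ) : BraidRelations (eOS n) where
  symm i j := by
    rcases eq_or_ne i j with rfl | h
    · rfl
    · simp only [← mkAlgHom_eAmb h, ← mkAlgHom_eAmb h.symm, eAmb, Sym2.eq_swap (a := i)]
  self := eOS_self n
  mul_self i j := by
    rcases eq_or_ne i j with rfl | h
    · simp [eOS_self]
    · rw [← mkAlgHom_eAmb h, ← map_mul, eAmb, ExteriorAlgebra.ι_sq_zero, map_zero]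
  anticomm i j k l := by
    rcases eq_or_ne i j with rfl | hij
    · simp [eOS_self]
    rcases eq_or_ne k l with rfl | hkl
    · simp [eOS_self]
    rw [← mkAlgHom_eAmb hij, ← mkAlgHom_eAmb hkl, ← map_mul, ← map_mul, ← map_neg]
    exact congrArg _ (eq_neg_of_add_eq_zero_left (ExteriorAlgebra.ι_add_mul_swap _ _))
  arnold i j k hij hjk hik := by
    simpa [mkAlgHom_eAmb] using RingQuot.mkAlgHom_rel ℚ (OSRel.rel i j k hij hjk hik)

lemma edgeAlgebra_eOS_univ (n : ℕ) : edgeAlgebra ℚ (eOS n) Set.univ = ⊤ := by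
  refine Algebra.eq_top_iff.mpr fun x ↦ ?_
  obtain ⟨y, rfl⟩ := RingQuot.mkAlgHom_surjective ℚ (OSRel n) x
  induction y using ExteriorAlgebra.induction with
  | algebraMap r => simpa only [AlgHom.commutes] using Subalgebra.algebraMap_mem _ r
  | mul x y hx hy => simpa only [map_mul] using mul_mem hx hy
  | add x y hx hy => simpa only [map_add] using add_mem hx hy
  | ι v =>
    induction v using Finsupp.induction_linear with
    | zero => simp
    | add f g hf hg => simpa only [map_add] using add_mem hf hg
    | single s c =>
      obtain ⟨⟨i, j⟩, hs⟩ := s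
      have hij : i ≠ j := hs
      rw [← mul_one c, ← smul_eq_mul, ← Finsupp.smul_single, map_smul, map_smul]
      exact Subalgebra.smul_mem _ (mkAlgHom_eAmb hij ▸ edge_mem_edgeAlgebra trivial trivial) c

lemma OSperm_eOS {n : ℕ} (σ : Equiv.Perm (Fin (n + 1))) (i j : Fin (n + 1)) :
    OSperm n σ (eOS n i j) = eOS n (σ i) (σ j) := by
  rcases eq_or_ne i j with rfl | h
  · simp [eOS_self]
  · rw [← mkAlgHom_eAmb h, ← mkAlgHom_eAmb (σ.injective.ne h), OSperm,
      RingQuot.liftAlgHom_mkAlgHom_apply, AlgHom.comp_apply, OSpermAmb_e]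

lemma OS_algHom_ext {n : ℕ} {f g : OS n →ₐ[ℚ] OS n} (h : ∀ i j, f (eOS n i j) = g (eOS n i j)) :
    f = g := by
  refine AlgHom.ext_of_adjoin_eq_top (edgeAlgebra_eOS_univ n) ?_
  rintro _ ⟨i, -, j, -, rfl⟩
  exact h i j

/-- The action of `S_{n+1}` on `OS_n` through the algebra maps `OSperm`. -/
instance (n : ℕ) : MulSemiringAction (Equiv.Perm (Fin (n + 1))) (OS n) where
  smul σ := OSperm n σ
  one_smul := DFunLike.congr_fun (f := OSperm n 1) (g := .id ℚ _)
    (OS_algHom_ext fun i j ↦ by simp [OSperm_eOS])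
  mul_smul σ τ := DFunLike.congr_fun (f := OSperm n (σ * τ)) (g := (OSperm n σ).comp (OSperm n τ))
    (OS_algHom_ext fun i j ↦ by simp [OSperm_eOS])
  smul_zero σ := map_zero (OSperm n σ)
  smul_add σ := map_add (OSperm n σ)
  smul_one σ := map_one (OSperm n σ)
  smul_mul σ := map_mul (OSperm n σ)

instance (n : ℕ) : SMulCommClass (Equiv.Perm (Fin (n + 1))) ℚ (OS n) where
  smul_comm σ := map_smul (OSperm n σ)

lemma mem_OSinv {n : ℕ} {x : OS n} :
    x ∈ OSinv n ↔ ∀ σ : Equiv.Perm (Fin (n + 1)), σ (Fin.last n) = Fin.last n → σ • x = x :=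
  Iff.rfl

lemma OSinv_eq_fixedPoints (n : ℕ) : OSinv n =
    FixedPoints.subalgebra ℚ (OS n)
      (MulAction.stabilizer (Equiv.Perm (Fin (n + 1))) (Fin.last n)) :=
  SetLike.ext fun _ ↦ mem_OSinv.trans mem_fixedPoints_stabilizer.symm

lemma starSum_eOS (n : ℕ) : starSum (eOS n) (Fin.last n) = mOS n := by
  rw [starSum, Fin.sum_univ_castSucc, eOS_self, add_zero, mOS]

lemma edgeSum_eOS (n : ℕ) : edgeSum (eOS n) = (2 : ℚ) • (aOS n + mOS n) := by
  have he := braidRelations_eOS n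
  have inner : ∑ i : Fin n, ∑ j : Fin n, eOS n i.castSucc j.castSucc = (2 : ℚ) • aOS n := by
    rw [sum_sum_eq_sum_lt (f := fun i j : Fin n ↦ eOS n i.castSucc j.castSucc) fun i ↦ he.self _,
      aOS, Finset.smul_sum]
    exact Finset.sum_congr rfl fun p _ ↦ by rw [he.symm p.2.castSucc, two_smul]
  simp only [edgeSum, Fin.sum_univ_castSucc, Finset.sum_add_distrib, inner, eOS_self, add_zero,
    he.symm (Fin.last n)]
  rw [mOS, smul_add, two_smul ℚ (∑ i, _), add_assoc]

lemma cherrySum_eOS (n : ℕ) : cherrySum (eOS n) (Fin.last n) = cOS n := by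
  have he := braidRelations_eOS n
  simp only [cherrySum, Fin.sum_univ_castSucc, he.mul_self, he.self, mul_zero, add_zero,
    Finset.sum_const_zero]
  rw [sum_sum_eq_sum_lt fun i ↦ by rw [he.self, zero_mul], cOS]
  exact Finset.sum_congr rfl fun p _ ↦ by rw [he.symm p.2.castSucc p.1.castSucc]

end OS

/-- For every integer `n ≥ 2`, the elements `a`, `m`, `g` are
`S_n`-invariant, and the `ℚ`-subalgebra of `OS_n` they generate is exactly `OS_n^{S_n}`. -/
theorem OSinv_generated_by_a_m_g (n : ℕ) (hn : 2 ≤ n) :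
    (aOS n ∈ OSinv n ∧ mOS n ∈ OSinv n ∧ gOS n ∈ OSinv n) ∧
    Algebra.adjoin ℚ {aOS n, mOS n, gOS n} = OSinv n := by
  have half_ne_zero : (((n + 1) / 2 : ℕ) : ℚ) ≠ 0 := Nat.cast_ne_zero.mpr (by omega)
  have adjoin_eq : Algebra.adjoin ℚ {aOS n, mOS n, gOS n} = OSinv n := by
    rw [OSinv_eq_fixedPoints, ← (braidRelations_eOS n).adjoin_eq_fixedPoints OSperm_eOS
      (edgeAlgebra_eOS_univ n), edgeSum_eOS, starSum_eOS, cherrySum_eOS, gOS,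
      ← Nat.cast_smul_eq_nsmul ℚ, adjoin_mul_sub_smul_eq half_ne_zero two_ne_zero]
  refine ⟨⟨?_, ?_, ?_⟩, adjoin_eq⟩ <;> exact adjoin_eq ▸ Algebra.subset_adjoin (by simp)

end
end

section
/- Let n ≥ 2 be an integer with n ≠ 3, and let d ≥ 0 be an integer. If {a·c^d, m·c^d} is linearly independent over ℚ in OS_n and dim_ℚ (OS_n^{S_n})_{2d+2} ≥ 2, then {a·m·c^d, c^{d+1}} is linearly independent over ℚ in OS_n. -/
noncomputable section

/-!
For `S ⊆ {1, …, n}` let `a_S`, `m_S`, `c_S` be the restrictions of `a`, `m`, `c` to the indices in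
`S`. Killing the generators with an index outside `S ∪ {n + 1}` is an algebra endomorphism, so a
relation `x • (a m c^d) + y • c^(d+1) = 0` persists with `a_S`, `m_S`, `c_S` in place of
`a`, `m`, `c`. The boundary `w_S = ∂ c_S` is `(#S - 1) m_S - 2 a_S`; hence `2 a_S m_S = m_S w_S`,
and applying `2 ∂` to the restricted relation gives `(x #S + 2 (d + 1) y) • w_S c_S^d = 0`.

For the full set, `w c^d` is a nontrivial combination of `a c^d` and `m c^d`, so
`x n + 2 (d + 1) y = 0`. If `x ≠ 0`, then `w_S c_S^d = 0` for all proper subsets `S`. But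
`w_S c_S^d` is a polynomial of degree at most `2 d + 2` in the indicator of `S`, so if
`2 d + 2 < n` it then vanishes for the full set as well, a contradiction.

The bound `2 d + 2 < n` follows from the dimension hypothesis: `OS_n` vanishes above degree `n`, and
its degree `n` part is spanned by the Hamiltonian paths starting at `n + 1`, which `S_n` permutes
transitively, so that its invariants are at most one-dimensional.
-/

/-- The functions of `S : Finset ι` that are polynomials of degree at most `k` in the indicator
of `S`: combinations of the `S ↦ if T ⊆ S then x else 0` with `#T ≤ k`. -/
def subsetPoly (R ι M : Type*) [DecidableEq ι] [Semiring R] [AddCommMonoid M] [Module R M]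
    (k : ℕ) : Submodule R (Finset ι → M) :=
  Submodule.span R {F | ∃ T : Finset ι, T.card ≤ k ∧ ∃ x : M, F = fun S ↦ if T ⊆ S then x else 0}

namespace subsetPoly

lemma ite_subset_mem {R ι M : Type*} [DecidableEq ι] [Semiring R] [AddCommMonoid M] [Module R M]
    {k : ℕ} {T : Finset ι} (hT : T.card ≤ k) (x : M) :
    (fun S ↦ if T ⊆ S then x else 0) ∈ subsetPoly R ι M k :=
  Submodule.subset_span ⟨T, hT, x, rfl⟩

section Mul

variable {R ι A : Type*} [DecidableEq ι] [CommSemiring R] [Semiring A] [Algebra R A]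

lemma mul_le (k l : ℕ) : subsetPoly R ι A k * subsetPoly R ι A l ≤ subsetPoly R ι A (k + l) := by
  conv_lhs => rw [subsetPoly, subsetPoly, Submodule.span_mul_span]
  refine Submodule.span_le.mpr ?_
  rintro _ ⟨_, ⟨T, hT, x, rfl⟩, _, ⟨U, hU, y, rfl⟩, rfl⟩
  refine Submodule.subset_span
    ⟨T ∪ U, (Finset.card_union_le T U).trans (add_le_add hT hU), x * y, ?_⟩
  funext S
  simp only [Pi.mul_apply, Finset.union_subset_iff, ite_and, mul_ite, ite_mul, zero_mul, mul_zero]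
  split_ifs <;> rfl

lemma mul_pow_mem {k l : ℕ} {F G : Finset ι → A} (hF : F ∈ subsetPoly R ι A k)
    (hG : G ∈ subsetPoly R ι A l) (d : ℕ) : F * G ^ d ∈ subsetPoly R ι A (k + l * d) := by
  induction d with
  | zero => simpa using hF
  | succ d ih =>
    rw [pow_succ, ← mul_assoc, mul_add_one, ← add_assoc]
    exact mul_le _ _ (Submodule.mul_mem_mul ih hG)

end Mul

variable {R ι M : Type*} [Fintype ι] [DecidableEq ι] [Semiring R] [AddCommGroup M] [Module R M]

lemma sum_neg_one_pow_card_smul_compl_eq_zero {k : ℕ} (hk : k < Fintype.card ι)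
    {F : Finset ι → M} (hF : F ∈ subsetPoly R ι M k) :
    ∑ U : Finset ι, (-1 : ℤ) ^ U.card • F Uᶜ = 0 := by
  induction hF using Submodule.span_induction with
  | mem F hF =>
    obtain ⟨T, hT, x, rfl⟩ := hF
    have hTc : Tᶜ.Nonempty := by
      rw [← Finset.card_pos, Finset.card_compl]
      omega
    calc ∑ U : Finset ι, (-1 : ℤ) ^ U.card • (if T ⊆ Uᶜ then x else 0)
        = ∑ U ∈ Tᶜ.powerset, (-1 : ℤ) ^ U.card • x := by
          simp only [smul_ite, smul_zero, ← Finset.sum_filter, Finset.subset_compl_comm (s := T)]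
          congr 1
          ext U
          simp
      _ = 0 := by
          rw [← Finset.sum_smul, Finset.sum_powerset_neg_one_pow_card_of_nonempty hTc, zero_smul]
  | zero => simp
  | add F G _ _ hF hG =>
    simp only [Pi.add_apply, smul_add, Finset.sum_add_distrib, hF, hG, add_zero]
  | smul r F _ hF => simp only [Pi.smul_apply, smul_comm _ r, ← Finset.smul_sum, hF, smul_zero]

lemma apply_univ_eq_zero {k : ℕ} (hk : k < Fintype.card ι) {F : Finset ι → M}
    (hF : F ∈ subsetPoly R ι M k) (h : ∀ S ≠ Finset.univ, F S = 0) : F Finset.univ = 0 := by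
  have hsum := sum_neg_one_pow_card_smul_compl_eq_zero hk hF
  rwa [Finset.sum_eq_single ∅ (fun U _ hU ↦ by simp [h Uᶜ (by simpa using hU)]) (by simp),
    Finset.card_empty, pow_zero, one_smul, Finset.compl_empty] at hsum

end subsetPoly

section LtPairs

variable {ι : Type*} [LinearOrder ι]

/-- The pairs `i < j` of elements of `S`. -/
def ltPairs (S : Finset ι) : Finset (ι × ι) := {p ∈ S ×ˢ S | p.1 < p.2}

lemma sum_ltPairs_eq_sum_univ_ite [Fintype ι] {M : Type*} [AddCommMonoid M] (S : Finset ι)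
    (f : ι × ι → M) :
    ∑ p ∈ ltPairs S, f p = ∑ p with p.1 < p.2, if p.1 ∈ S ∧ p.2 ∈ S then f p else 0 := by
  rw [← Finset.sum_filter, Finset.filter_filter, ltPairs]
  congr 1
  ext p
  simp [and_comm]

lemma sum_ltPairs_mem_subsetPoly [Finite ι] {R M : Type*} [Semiring R] [AddCommMonoid M]
    [Module R M] (f : ι × ι → M) : (fun S ↦ ∑ p ∈ ltPairs S, f p) ∈ subsetPoly R ι M 2 := by
  cases nonempty_fintype ι
  have h : (fun S ↦ ∑ p ∈ ltPairs S, f p) = ∑ p : ι × ι with p.1 < p.2,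
      fun S ↦ if {p.1, p.2} ⊆ S then f p else 0 := by
    ext S
    simp [sum_ltPairs_eq_sum_univ_ite, Finset.insert_subset_iff]
  rw [h]
  exact sum_mem fun p _ ↦ subsetPoly.ite_subset_mem Finset.card_le_two (f p)

lemma sum_ltPairs_add_add_sum {M : Type*} [AddCommMonoid M] (S : Finset ι) (f : ι → M) :
    ∑ p ∈ ltPairs S, (f p.1 + f p.2) + ∑ i ∈ S, f i = S.card • ∑ i ∈ S, f i := by
  have htri (i j : ι) : f i =
      (if i < j then f i else 0) + (if j < i then f i else 0) + if i = j then f i else 0 := by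
    rcases lt_trichotomy i j with h | rfl | h
    · simp [h, h.not_gt, h.ne]
    · simp
    · simp [h, h.not_gt, h.ne']
  calc ∑ p ∈ ltPairs S, (f p.1 + f p.2) + ∑ i ∈ S, f i
      = ∑ i ∈ S, ∑ j ∈ S, (if i < j then f i else 0)
        + ∑ i ∈ S, ∑ j ∈ S, (if j < i then f i else 0)
        + ∑ i ∈ S, ∑ j ∈ S, if i = j then f i else 0 := by
        rw [Finset.sum_comm (s := S) (t := S) (f := fun i j ↦ if j < i then f i else 0)]
        simp [ltPairs, Finset.sum_filter, Finset.sum_product, Finset.sum_add_distrib]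
    _ = ∑ i ∈ S, ∑ _j ∈ S, f i := by simp only [← Finset.sum_add_distrib, ← htri]
    _ = S.card • ∑ i ∈ S, f i := by simp only [Finset.sum_const, Finset.smul_sum]

end LtPairs

lemma exists_perm_map_eq_of_nodup {α : Type*} [Finite α] {l l' : List α} (hl : l.Nodup)
    (hl' : l'.Nodup) (hlen : l.length = l'.length) : ∃ σ : Equiv.Perm α, l.map σ = l' := by
  obtain ⟨σ, hσ⟩ := Equiv.Perm.exists_extending_pair l.get (l'.get ∘ Fin.cast hlen)
    hl.injective_get (hl'.injective_get.comp (Fin.cast_injective hlen))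
  refine ⟨σ, List.ext_get (by rwa [List.length_map]) fun i hi _ ↦ ?_⟩
  simpa using hσ ⟨i, by simpa using hi⟩

namespace OS

variable {n : ℕ}

section Generators

lemma eOS_self (i : Fin (n + 1)) : eOS n i i = 0 := by simp [eOS]

lemma eOS_of_ne {i j : Fin (n + 1)} (h : i ≠ j) :
    eOS n i j = RingQuot.mkAlgHom ℚ (OSRel n) (eAmb n i j h) := dif_neg h

lemma eOS_comm (i j : Fin (n + 1)) : eOS n i j = eOS n j i := by
  rcases eq_or_ne i j with rfl | h
  · rfl
  · simp only [eOS_of_ne h, eOS_of_ne h.symm, eAmb, Sym2.eq_swap]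

lemma OSdeg_one_eq_map :
    OSdeg n 1 = (LinearMap.range (ExteriorAlgebra.ι ℚ : (OSidx n →₀ ℚ) →ₗ[ℚ] OSamb n)).map
      (RingQuot.mkAlgHom ℚ (OSRel n)).toLinearMap := by
  rw [OSdeg, pow_one]

lemma OSdeg_eq_pow (k : ℕ) : OSdeg n k = OSdeg n 1 ^ k := by
  rw [OSdeg_one_eq_map]
  exact Submodule.map_pow _ _ k

lemma OSdeg_one_eq_span : OSdeg n 1 = Submodule.span ℚ {x | ∃ i j, x = eOS n i j} := by
  rw [OSdeg_one_eq_map]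
  refine le_antisymm ?_ (Submodule.span_le.mpr ?_)
  · rw [← LinearMap.range_comp, ← Submodule.map_top, ← Finsupp.basisSingleOne.span_eq,
      Submodule.map_span_le]
    rintro _ ⟨⟨⟨i, j⟩, h⟩, rfl⟩
    rw [Finsupp.coe_basisSingleOne]
    exact Submodule.subset_span ⟨i, j, (eOS_of_ne (mt Sym2.mk_isDiag_iff.mpr h)).symm⟩
  · rintro _ ⟨i, j, rfl⟩
    rcases eq_or_ne i j with rfl | h
    · rw [eOS_self]
      exact zero_mem _
    · rw [eOS_of_ne h]
      exact Submodule.mem_map_of_mem ⟨_, rfl⟩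

lemma eOS_mem_OSdeg_one (i j : Fin (n + 1)) : eOS n i j ∈ OSdeg n 1 := by
  rw [OSdeg_one_eq_span]
  exact Submodule.subset_span ⟨i, j, rfl⟩

lemma mul_eq_neg_mul_of_mem_OSdeg_one {x y : OS n} (hx : x ∈ OSdeg n 1) (hy : y ∈ OSdeg n 1) :
    x * y = -(y * x) := by
  rw [OSdeg_one_eq_map] at hx hy
  obtain ⟨_, ⟨v, rfl⟩, rfl⟩ := hx
  obtain ⟨_, ⟨w, rfl⟩, rfl⟩ := hy
  simp only [AlgHom.toLinearMap_apply, ← map_mul, ← map_neg]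
  exact congrArg _ (eq_neg_of_add_eq_zero_left (ExteriorAlgebra.ι_add_mul_swap v w))

lemma mul_self_eq_zero_of_mem_OSdeg_one {x : OS n} (hx : x ∈ OSdeg n 1) : x * x = 0 := by
  rw [OSdeg_one_eq_map] at hx
  obtain ⟨_, ⟨v, rfl⟩, rfl⟩ := hx
  simp only [AlgHom.toLinearMap_apply, ← map_mul, ExteriorAlgebra.ι_sq_zero, map_zero]

lemma commute_mul_of_mem_OSdeg_one {x y z : OS n} (hx : x ∈ OSdeg n 1) (hy : y ∈ OSdeg n 1)
    (hz : z ∈ OSdeg n 1) : Commute (x * y) z := by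
  rw [Commute, SemiconjBy, mul_assoc, mul_eq_neg_mul_of_mem_OSdeg_one hy hz, mul_neg, ← mul_assoc,
    mul_eq_neg_mul_of_mem_OSdeg_one hx hz, neg_mul, neg_neg, mul_assoc]

lemma eOS_mul_self (i j : Fin (n + 1)) : eOS n i j * eOS n i j = 0 :=
  mul_self_eq_zero_of_mem_OSdeg_one (eOS_mem_OSdeg_one i j)

lemma eOS_anticomm (i j k l : Fin (n + 1)) : eOS n i j * eOS n k l = -(eOS n k l * eOS n i j) :=
  mul_eq_neg_mul_of_mem_OSdeg_one (eOS_mem_OSdeg_one i j) (eOS_mem_OSdeg_one k l)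

lemma eOS_relation (i j k : Fin (n + 1)) :
    eOS n i k * eOS n j k - eOS n i j * eOS n j k + eOS n i j * eOS n i k = 0 := by
  rcases eq_or_ne i j with rfl | hij
  · simp [eOS_self, eOS_mul_self]
  rcases eq_or_ne j k with rfl | hjk
  · simp [eOS_self, eOS_mul_self]
  rcases eq_or_ne i k with rfl | hik
  · simp [eOS_self, eOS_comm j i, eOS_mul_self]
  · simpa [eOS_of_ne, hij, hjk, hik] using
      RingQuot.mkAlgHom_rel ℚ (OSRel.rel i j k hij hjk hik)

lemma adjoin_range_eOS : Algebra.adjoin ℚ {x | ∃ i j, x = eOS n i j} = ⊤ := by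
  have hι : Algebra.adjoin ℚ
      (Set.range (ExteriorAlgebra.ι ℚ : (OSidx n →₀ ℚ) →ₗ[ℚ] OSamb n)) = ⊤ :=
    CliffordAlgebra.adjoin_range_ι
  rw [← Algebra.adjoin_span, ← OSdeg_one_eq_span, OSdeg_one_eq_map, Submodule.map_coe,
    AlgHom.coe_toLinearMap, ← AlgHom.map_adjoin, LinearMap.coe_range, hι, Algebra.map_top]
  exact (AlgHom.range_eq_top _).mpr (RingQuot.mkAlgHom_surjective _ _)

end Generators

section Lift

variable {B : Type*} [Ring B] [Algebra ℚ B]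

/-- The universal property of `OS n`: the algebra homomorphism sending each `e_{ij}`, `i ≠ j`, to
`f i j`. -/
def lift (f : Fin (n + 1) → Fin (n + 1) → B) (hcomm : ∀ i j, f i j = f j i)
    (hanti : ∀ i j k l, f i j * f k l = -(f k l * f i j))
    (hrel : ∀ i j k, i ≠ j → j ≠ k → i ≠ k →
      f i k * f j k - f i j * f j k + f i j * f i k = 0) : OS n →ₐ[ℚ] B :=
  let L : (OSidx n →₀ ℚ) →ₗ[ℚ] B := Finsupp.linearCombination ℚ fun s ↦ s.1.lift ⟨f, hcomm⟩
  have hL (v : OSidx n →₀ ℚ) : L v * L v = 0 := by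
    have hbil : (LinearMap.mul ℚ B).compl₁₂ L L = -(LinearMap.mul ℚ B).flip.compl₁₂ L L := by
      ext ⟨⟨i, j⟩, _⟩ ⟨⟨k, l⟩, _⟩
      simpa [L] using hanti i j k l
    have hneg : L v * L v = -(L v * L v) := LinearMap.congr_fun₂ hbil v v
    rw [eq_neg_iff_add_eq_zero, ← two_smul ℚ] at hneg
    exact (smul_eq_zero_iff_right (two_ne_zero' ℚ)).mp hneg
  RingQuot.liftAlgHom ℚ ⟨ExteriorAlgebra.lift ℚ ⟨L, hL⟩, by
    rintro _ _ ⟨i, j, k, hij, hjk, hik⟩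
    simpa [eAmb, L] using hrel i j k hij hjk hik⟩

lemma lift_eOS {f : Fin (n + 1) → Fin (n + 1) → B} {hcomm hanti hrel} {i j : Fin (n + 1)}
    (h : i ≠ j) : lift f hcomm hanti hrel (eOS n i j) = f i j := by
  simp [eOS_of_ne h, lift, eAmb]

end Lift

section Boundary

/-- The representation of `OS n` by upper triangular matrices in which `e_{ij}` acts as
`!![-e_{ij}, 1; 0, e_{ij}]`; its upper right entry is the boundary operator of `OS n`. -/
def boundaryRep (n : ℕ) : OS n →ₐ[ℚ] Matrix (Fin 2) (Fin 2) (OS n) :=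
  lift (fun i j ↦ !![-eOS n i j, 1; 0, eOS n i j])
    (fun i j ↦ by rw [eOS_comm i j])
    (fun i j k l ↦ by simp [eOS_anticomm i j k l])
    (fun i j k _ _ _ ↦ by
      ext r s
      fin_cases r <;> fin_cases s <;> simp [eOS_relation i j k])

lemma boundaryRep_eOS {i j : Fin (n + 1)} (h : i ≠ j) :
    boundaryRep n (eOS n i j) = !![-eOS n i j, 1; 0, eOS n i j] :=
  lift_eOS h

lemma boundaryRep_lower (x : OS n) : boundaryRep n x 1 0 = 0 ∧ boundaryRep n x 1 1 = x := by
  have hx : x ∈ Algebra.adjoin ℚ {x | ∃ i j, x = eOS n i j} := adjoin_range_eOS ▸ Algebra.mem_top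
  induction hx using Algebra.adjoin_induction with
  | mem _ hx =>
    obtain ⟨i, j, rfl⟩ := hx
    rcases eq_or_ne i j with rfl | h
    · simp [eOS_self]
    · simp [boundaryRep_eOS h]
  | algebraMap r => simp [AlgHom.commutes, Matrix.algebraMap_matrix_apply]
  | add x y _ _ hx hy => simp [hx, hy]
  | mul x y _ _ hx hy => simp [Matrix.mul_apply, Fin.sum_univ_two, hx, hy]

/-- The boundary operator of `OS n`: the antiderivation with `∂ e_{ij} = 1`. -/
def boundary (n : ℕ) : OS n →ₗ[ℚ] OS n :=
  Matrix.entryLinearMap ℚ (OS n) 0 1 ∘ₗ (boundaryRep n).toLinearMap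

lemma boundary_eOS_mul {i j : Fin (n + 1)} (h : i ≠ j) (x : OS n) :
    boundary n (eOS n i j * x) = x - eOS n i j * boundary n x := by
  simp [boundary, boundaryRep_eOS h, boundaryRep_lower x, Matrix.vecMul_eq_sum, sub_eq_neg_add]

lemma boundary_one : boundary n 1 = 0 := by simp [boundary]

end Boundary

section Restrict

/-- The endomorphism of `OS n` killing the `e_{ij}` with an index outside of `S ∪ {n + 1}`. -/
def restrict (S : Finset (Fin n)) : OS n →ₐ[ℚ] OS n :=
  let T := insert (Fin.last n) (S.map Fin.castSuccEmb)
  lift (fun i j ↦ if i ∈ T ∧ j ∈ T then eOS n i j else 0)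
    (fun i j ↦ by simp only [eOS_comm i j, and_comm])
    (fun i j k l ↦ by split_ifs <;> simp [eOS_anticomm i j k l])
    (fun i j k _ _ _ ↦ by
      have h := eOS_relation i j k
      by_cases hi : i ∈ T <;> by_cases hj : j ∈ T <;> by_cases hk : k ∈ T <;> simp [hi, hj, hk, h])

lemma restrict_eOS_castSucc (S : Finset (Fin n)) (i j : Fin n) :
    restrict S (eOS n i.castSucc j.castSucc) =
      if i ∈ S ∧ j ∈ S then eOS n i.castSucc j.castSucc else 0 := by
  rcases eq_or_ne i j with rfl | h
  · simp [eOS_self]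
  · simp [restrict, lift_eOS (Fin.castSucc_injective n |>.ne h)]

lemma restrict_eOS_last (S : Finset (Fin n)) (i : Fin n) :
    restrict S (eOS n i.castSucc (Fin.last n)) =
      if i ∈ S then eOS n i.castSucc (Fin.last n) else 0 := by
  simp [restrict, lift_eOS (Fin.castSucc_lt_last i).ne]

end Restrict

section Filtration

/-- The span of the `e_{ab}` with `a, b ∈ T`. -/
def genSpan (T : Finset (Fin (n + 1))) : Submodule ℚ (OS n) :=
  Submodule.span ℚ {y | ∃ a ∈ T, ∃ b ∈ T, y = eOS n a b}

/-- The span of the `e_{ax}` with `a ∈ T`. -/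
def starSpan (T : Finset (Fin (n + 1))) (x : Fin (n + 1)) : Submodule ℚ (OS n) :=
  Submodule.span ℚ {y | ∃ a ∈ T, y = eOS n a x}

variable (T : Finset (Fin (n + 1))) (x : Fin (n + 1))

lemma OSdeg_eq_genSpan_univ_pow (k : ℕ) : OSdeg n k = genSpan Finset.univ ^ k := by
  rw [OSdeg_eq_pow, OSdeg_one_eq_span, genSpan]
  simp only [Finset.mem_univ, true_and]

lemma genSpan_singleton : genSpan {x} = ⊥ := by simp [genSpan, eOS_self]

lemma genSpan_insert_le : genSpan (insert x T) ≤ starSpan T x ⊔ genSpan T := by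
  have hstar {a : Fin (n + 1)} (ha : a ∈ T) : eOS n a x ∈ starSpan T x ⊔ genSpan T :=
    Submodule.mem_sup_left (Submodule.subset_span ⟨a, ha, rfl⟩)
  refine Submodule.span_le.mpr ?_
  rintro _ ⟨a, ha, b, hb, rfl⟩
  rcases Finset.mem_insert.mp ha with rfl | haT <;> rcases Finset.mem_insert.mp hb with rfl | hbT
  · rw [eOS_self]
    exact zero_mem _
  · exact eOS_comm _ b ▸ hstar hbT
  · exact hstar haT
  · exact Submodule.mem_sup_right (Submodule.subset_span ⟨a, haT, b, hbT, rfl⟩)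

lemma starSpan_mul_starSpan_le : starSpan T x * starSpan T x ≤ starSpan T x * genSpan T := by
  conv_lhs => rw [starSpan, Submodule.span_mul_span]
  refine Submodule.span_le.mpr ?_
  rintro _ ⟨_, ⟨a, ha, rfl⟩, _, ⟨b, hb, rfl⟩, rfl⟩
  have hab : eOS n a x * eOS n b x = eOS n a x * eOS n a b - eOS n b x * eOS n a b := by
    rw [eOS_anticomm a x a b, eOS_anticomm b x a b, ← sub_eq_zero, ← eOS_relation a b x]
    abel
  have hmem {c : Fin (n + 1)} (hc : c ∈ T) : eOS n c x * eOS n a b ∈ starSpan T x * genSpan T :=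
    Submodule.mul_mem_mul (Submodule.subset_span ⟨c, hc, rfl⟩)
      (Submodule.subset_span ⟨a, ha, b, hb, rfl⟩)
  simpa only [hab, SetLike.mem_coe] using sub_mem (hmem ha) (hmem hb)

lemma genSpan_mul_starSpan_le : genSpan T * starSpan T x ≤ starSpan T x * genSpan T := by
  conv_lhs => rw [starSpan, genSpan, Submodule.span_mul_span]
  refine Submodule.span_le.mpr ?_
  rintro _ ⟨_, ⟨a, ha, b, hb, rfl⟩, _, ⟨c, hc, rfl⟩, rfl⟩
  simp only [eOS_anticomm a b]
  exact neg_mem (Submodule.mul_mem_mul (Submodule.subset_span ⟨c, hc, rfl⟩)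
    (Submodule.subset_span ⟨a, ha, b, hb, rfl⟩))

lemma genSpan_insert_pow_le (k : ℕ) :
    genSpan (insert x T) ^ (k + 1) ≤ starSpan T x * genSpan T ^ k ⊔ genSpan T ^ (k + 1) := by
  induction k with
  | zero => simpa using genSpan_insert_le T x
  | succ k ih =>
    rw [pow_succ' _ (k + 1)]
    refine (mul_le_mul' (genSpan_insert_le T x) ih).trans ?_
    rw [Submodule.sup_mul, Submodule.mul_sup, Submodule.mul_sup, ← mul_assoc, ← mul_assoc,
      ← pow_succ']
    refine sup_le (sup_le (le_sup_of_le_left ?_) le_sup_left)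
      (sup_le (le_sup_of_le_left ?_) le_sup_right)
    · rw [pow_succ', ← mul_assoc]
      exact mul_le_mul' (starSpan_mul_starSpan_le T x) le_rfl
    · rw [pow_succ', ← mul_assoc]
      exact mul_le_mul' (genSpan_mul_starSpan_le T x) le_rfl

lemma genSpan_insert_pow_eq_bot : genSpan (insert x T) ^ (T.card + 1) = ⊥ := by
  induction T using Finset.induction_on with
  | empty => simpa using genSpan_singleton x
  | insert y T hy ih =>
    rw [Finset.insert_comm, Finset.card_insert_of_notMem hy, eq_bot_iff]
    refine (genSpan_insert_pow_le _ _ _).trans ?_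
    rw [pow_succ _ (T.card + 1), ih, Submodule.mul_bot, Submodule.bot_mul, sup_bot_eq]

end Filtration

section Paths

/-- The monomial of the path starting at `r` and visiting the vertices of a list in order. -/
def path (r : Fin (n + 1)) : List (Fin (n + 1)) → OS n
  | [] => 1
  | x :: l => eOS n r x * path x l

/-- The span of the monomials of the paths starting at `r` and visiting, in any order, the
elements of `s`. -/
def pathSpan (r : Fin (n + 1)) (s : Multiset (Fin (n + 1))) : Submodule ℚ (OS n) :=
  Submodule.span ℚ {y | ∃ l : List (Fin (n + 1)), ↑l = s ∧ y = path r l}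

variable {r v x y : Fin (n + 1)} {s : Multiset (Fin (n + 1))} {l : List (Fin (n + 1))}

lemma path_mem_pathSpan (r : Fin (n + 1)) (l : List (Fin (n + 1))) : path r l ∈ pathSpan r ↑l :=
  Submodule.subset_span ⟨l, rfl, rfl⟩

lemma eOS_mul_mem_pathSpan_cons {z : OS n} (hz : z ∈ pathSpan y s) :
    eOS n r y * z ∈ pathSpan r (y ::ₘ s) := by
  refine Submodule.span_le (p := (pathSpan r (y ::ₘ s)).comap (LinearMap.mulLeft ℚ (eOS n r y)))
    |>.mpr ?_ hz
  rintro _ ⟨l, rfl, rfl⟩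
  exact path_mem_pathSpan r (y :: l)

lemma eOS_mul_path_mem_pathSpan (hv : v ∈ r :: l) :
    eOS n v x * path r l ∈ pathSpan r (x ::ₘ ↑l) := by
  induction l generalizing r v with
  | nil =>
    rw [List.mem_singleton.mp hv]
    exact path_mem_pathSpan r [x]
  | cons y l ih =>
    have htail {w : Fin (n + 1)} (hw : w ∈ y :: l) :
        eOS n r y * (eOS n w x * path y l) ∈ pathSpan r (x ::ₘ ↑(y :: l)) := by
      rw [← Multiset.cons_coe, Multiset.cons_swap]
      exact eOS_mul_mem_pathSpan_cons (ih hw)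
    -- The relation on `v, x, y` places `x` directly after `v` or pushes it beyond `y`.
    rcases List.mem_cons.mp hv with rfl | hv
    · have hrel : eOS n v x * eOS n v y = eOS n v x * eOS n x y - eOS n v y * eOS n y x := by
        rw [eOS_comm y x, eOS_anticomm v x x y, eOS_anticomm v y x y, eOS_comm v x, eOS_comm v y,
          ← sub_eq_zero, ← eOS_relation x y v]
        abel
      rw [path, ← mul_assoc, hrel, sub_mul, mul_assoc, mul_assoc]
      exact sub_mem (path_mem_pathSpan v (x :: y :: l)) (htail List.mem_cons_self)
    · rw [path, ← mul_assoc, eOS_anticomm v x r y, neg_mul, mul_assoc]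
      exact neg_mem (htail hv)

lemma genSpan_insert_pow_card_le_pathSpan (r : Fin (n + 1)) (T : Finset (Fin (n + 1))) :
    genSpan (insert r T) ^ T.card ≤ pathSpan r T.val := by
  induction T using Finset.induction_on with
  | empty => exact Submodule.one_le.mpr (path_mem_pathSpan r [])
  | insert x T hx ih =>
    rw [Finset.insert_comm, Finset.card_insert_of_notMem hx, Finset.insert_val_of_notMem hx]
    refine (genSpan_insert_pow_le _ _ _).trans ?_
    rw [genSpan_insert_pow_eq_bot, sup_bot_eq]
    refine (mul_le_mul' le_rfl ih).trans ?_
    rw [starSpan, pathSpan, Submodule.span_mul_span]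
    refine Submodule.span_le.mpr ?_
    rintro _ ⟨_, ⟨v, hv, rfl⟩, _, ⟨l, hl, rfl⟩, rfl⟩
    have hvl : v ∈ r :: l := List.mem_cons.mpr ((Finset.mem_insert.mp hv).imp_right fun hvT ↦ by
      rwa [← Multiset.mem_coe, hl])
    exact hl ▸ eOS_mul_path_mem_pathSpan hvl

end Paths

section TopDegree

lemma insert_last_erase :
    insert (Fin.last n) (Finset.univ.erase (Fin.last n)) = Finset.univ :=
  Finset.insert_erase (Finset.mem_univ _)

lemma card_univ_erase_last : (Finset.univ.erase (Fin.last n)).card = n := by simp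

lemma OSdeg_eq_bot {k : ℕ} (hk : n < k) : OSdeg n k = ⊥ := by
  have htop := genSpan_insert_pow_eq_bot (Finset.univ.erase (Fin.last n)) (Fin.last n)
  rw [insert_last_erase, card_univ_erase_last] at htop
  rw [OSdeg_eq_genSpan_univ_pow, ← Nat.add_sub_of_le hk, pow_add, Nat.succ_eq_add_one, htop,
    Submodule.bot_mul]

lemma OSdeg_self_le_pathSpan :
    OSdeg n n ≤ pathSpan (Fin.last n) (Finset.univ.erase (Fin.last n)).val := by
  have htop := genSpan_insert_pow_card_le_pathSpan (Fin.last n) (Finset.univ.erase (Fin.last n))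
  rwa [insert_last_erase, card_univ_erase_last, ← OSdeg_eq_genSpan_univ_pow] at htop

lemma OSperm_eOS (σ : Equiv.Perm (Fin (n + 1))) (i j : Fin (n + 1)) :
    OSperm n σ (eOS n i j) = eOS n (σ i) (σ j) := by
  rcases eq_or_ne i j with rfl | h
  · simp [eOS_self]
  · simp [eOS_of_ne h, eOS_of_ne (σ.injective.ne h), OSperm, OSpermAmb_e]

lemma OSperm_path (σ : Equiv.Perm (Fin (n + 1))) (r : Fin (n + 1)) (l : List (Fin (n + 1))) :
    OSperm n σ (path r l) = path (σ r) (l.map σ) := by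
  induction l generalizing r with
  | nil => exact map_one _
  | cons x l ih => rw [path, map_mul, OSperm_eOS, ih, List.map_cons, path]

/-- The sum of the translates under the permutations of `{1, …, n+1}` fixing `n+1`. -/
def symmetrize (n : ℕ) : OS n →ₗ[ℚ] OS n :=
  ∑ σ : MulAction.stabilizer (Equiv.Perm (Fin (n + 1))) (Fin.last n), (OSperm n σ).toLinearMap

lemma symmetrize_of_mem_OSinv {z : OS n} (hz : z ∈ OSinv n) : symmetrize n z =
    (Fintype.card (MulAction.stabilizer (Equiv.Perm (Fin (n + 1))) (Fin.last n)) : ℚ) • z := by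
  simp only [symmetrize, LinearMap.sum_apply, AlgHom.toLinearMap_apply]
  rw [Finset.sum_congr rfl fun σ _ ↦ hz σ.1 σ.2, Finset.sum_const, Finset.card_univ,
    Nat.cast_smul_eq_nsmul]

lemma symmetrize_path_last (l : List (Fin (n + 1))) :
    symmetrize n (path (Fin.last n) l) =
      ∑ σ : MulAction.stabilizer (Equiv.Perm (Fin (n + 1))) (Fin.last n),
        path (Fin.last n) (l.map (σ : Equiv.Perm (Fin (n + 1)))) := by
  simp only [symmetrize, LinearMap.sum_apply, AlgHom.toLinearMap_apply, OSperm_path]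
  exact Finset.sum_congr rfl fun σ _ ↦ congrArg (path · _) σ.2

lemma symmetrize_path_last_eq {l l' : List (Fin (n + 1))} (hl : (Fin.last n :: l).Nodup)
    (hl' : (Fin.last n :: l').Nodup) (hlen : l.length = l'.length) :
    symmetrize n (path (Fin.last n) l) = symmetrize n (path (Fin.last n) l') := by
  obtain ⟨τ, hτ⟩ := exists_perm_map_eq_of_nodup hl hl' (by simpa using hlen)
  obtain ⟨hτlast, rfl⟩ := List.cons_eq_cons.mp hτ
  let τ' : MulAction.stabilizer (Equiv.Perm (Fin (n + 1))) (Fin.last n) := ⟨τ, hτlast⟩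
  rw [symmetrize_path_last, symmetrize_path_last]
  refine (Fintype.sum_equiv (Equiv.mulRight τ') _ _ fun σ ↦ ?_).symm
  simp [τ']

lemma map_symmetrize_pathSpan_le {l : List (Fin (n + 1))} (hl : (Fin.last n :: l).Nodup) :
    (pathSpan (Fin.last n) ↑l).map (symmetrize n) ≤
      Submodule.span ℚ {symmetrize n (path (Fin.last n) l)} := by
  rw [pathSpan, Submodule.map_span_le]
  rintro _ ⟨l', hl', rfl⟩
  have hperm : l'.Perm l := Multiset.coe_eq_coe.mp hl'
  rw [symmetrize_path_last_eq ((hperm.cons _).nodup_iff.mpr hl) hl hperm.length_eq]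
  exact Submodule.mem_span_singleton_self _

lemma finrank_OSinvDeg_self_le_one : Module.finrank ℚ (OSinvDeg n n) ≤ 1 := by
  set l := (Finset.univ.erase (Fin.last n)).toList
  have hl : (Fin.last n :: l).Nodup := by simp [l, Finset.nodup_toList]
  have hle : OSinvDeg n n ≤ Submodule.span ℚ {symmetrize n (path (Fin.last n) l)} := by
    rintro z ⟨hinv, hdeg⟩
    have hz : symmetrize n z ∈ Submodule.span ℚ {symmetrize n (path (Fin.last n) l)} :=
      map_symmetrize_pathSpan_le hl ⟨z, by simpa [l] using OSdeg_self_le_pathSpan hdeg, rfl⟩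
    rw [symmetrize_of_mem_OSinv hinv] at hz
    exact (Submodule.smul_mem_iff _ (Nat.cast_ne_zero.mpr Fintype.card_ne_zero)).mp hz
  exact (Submodule.finrank_mono hle).trans <| by
    simpa using finrank_span_le_card {symmetrize n (path (Fin.last n) l)}

lemma lt_of_two_le_finrank_OSinvDeg {k : ℕ} (h : 2 ≤ Module.finrank ℚ (OSinvDeg n k)) : k < n := by
  by_contra! hk
  rcases hk.eq_or_lt with rfl | hk
  · exact absurd (h.trans finrank_OSinvDeg_self_le_one) (by norm_num)
  · rw [OSinvDeg, OSdeg_eq_bot hk, inf_bot_eq, finrank_bot] at h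
    omega

end TopDegree

section Restricted

variable (S : Finset (Fin n))

/-- The restriction of `aOS n` to the indices in `S`. -/
def aOn : OS n := ∑ p ∈ ltPairs S, eOS n p.1.castSucc p.2.castSucc

/-- The restriction of `mOS n` to the indices in `S`. -/
def mOn : OS n := ∑ i ∈ S, eOS n i.castSucc (Fin.last n)

/-- The restriction of `cOS n` to the indices in `S`. -/
def cOn : OS n :=
  ∑ p ∈ ltPairs S, (eOS n p.1.castSucc p.2.castSucc * eOS n p.1.castSucc (Fin.last n)
    + eOS n p.1.castSucc p.2.castSucc * eOS n p.2.castSucc (Fin.last n))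

/-- The boundary of `cOn S`. -/
def boundaryC : OS n :=
  ∑ p ∈ ltPairs S, (eOS n p.1.castSucc (Fin.last n) + eOS n p.2.castSucc (Fin.last n)
    - (2 : ℚ) • eOS n p.1.castSucc p.2.castSucc)

lemma restrict_aOS : restrict S (aOS n) = aOn S := by
  simp only [aOS, aOn, map_sum, restrict_eOS_castSucc, sum_ltPairs_eq_sum_univ_ite]

lemma restrict_mOS : restrict S (mOS n) = mOn S := by
  simp only [mOS, mOn, map_sum, restrict_eOS_last, Finset.sum_ite_mem, Finset.univ_inter]

lemma restrict_cOS : restrict S (cOS n) = cOn S := by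
  simp only [cOS, cOn, map_sum, sum_ltPairs_eq_sum_univ_ite]
  refine Finset.sum_congr rfl fun p _ ↦ ?_
  by_cases h₁ : p.1 ∈ S <;> by_cases h₂ : p.2 ∈ S <;>
    simp [restrict_eOS_castSucc, restrict_eOS_last, h₁, h₂]

lemma boundaryC_eq : boundaryC S = ((S.card : ℚ) - 1) • mOn S - (2 : ℚ) • aOn S := by
  have hsum := sum_ltPairs_add_add_sum S fun i ↦ eOS n i.castSucc (Fin.last n)
  rw [boundaryC, mOn, aOn, Finset.sum_sub_distrib, ← Finset.smul_sum, sub_smul, one_smul,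
    Nat.cast_smul_eq_nsmul, ← hsum, add_sub_cancel_right]

lemma aOn_mem_OSdeg_one : aOn S ∈ OSdeg n 1 := sum_mem fun _ _ ↦ eOS_mem_OSdeg_one _ _

lemma mOn_mem_OSdeg_one : mOn S ∈ OSdeg n 1 := sum_mem fun _ _ ↦ eOS_mem_OSdeg_one _ _

lemma boundaryC_mem_OSdeg_one : boundaryC S ∈ OSdeg n 1 := by
  rw [boundaryC_eq]
  exact sub_mem (Submodule.smul_mem _ _ (mOn_mem_OSdeg_one S))
    (Submodule.smul_mem _ _ (aOn_mem_OSdeg_one S))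

lemma two_smul_aOn_mul_mOn : (2 : ℚ) • (aOn S * mOn S) = mOn S * boundaryC S := by
  rw [boundaryC_eq, mul_sub, mul_smul_comm, mul_smul_comm,
    mul_self_eq_zero_of_mem_OSdeg_one (mOn_mem_OSdeg_one S),
    mul_eq_neg_mul_of_mem_OSdeg_one (mOn_mem_OSdeg_one S) (aOn_mem_OSdeg_one S)]
  simp

lemma commute_cOn_boundaryC : Commute (cOn S) (boundaryC S) :=
  Commute.sum_left _ _ _ fun _ _ ↦
    .add_left
      (commute_mul_of_mem_OSdeg_one (eOS_mem_OSdeg_one _ _) (eOS_mem_OSdeg_one _ _)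
        (boundaryC_mem_OSdeg_one S))
      (commute_mul_of_mem_OSdeg_one (eOS_mem_OSdeg_one _ _) (eOS_mem_OSdeg_one _ _)
        (boundaryC_mem_OSdeg_one S))

variable {S} in
lemma castSucc_ne_of_mem_ltPairs {p : Fin n × Fin n} (hp : p ∈ ltPairs S) :
    p.1.castSucc ≠ p.2.castSucc :=
  (Fin.castSucc_lt_castSucc_iff.mpr (Finset.mem_filter.mp hp).2).ne

lemma boundary_mOn_mul (x : OS n) :
    boundary n (mOn S * x) = (S.card : ℚ) • x - mOn S * boundary n x := by
  simp [mOn, Finset.sum_mul, boundary_eOS_mul (Fin.castSucc_lt_last _).ne, Finset.sum_sub_distrib,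
    Nat.cast_smul_eq_nsmul]

lemma boundary_boundaryC_mul (x : OS n) :
    boundary n (boundaryC S * x) = -(boundaryC S * boundary n x) := by
  simp only [boundaryC, Finset.sum_mul, map_sum, ← Finset.sum_neg_distrib]
  refine Finset.sum_congr rfl fun p hp ↦ ?_
  simp only [add_mul, sub_mul, smul_mul_assoc, map_add, map_sub, map_smul,
    boundary_eOS_mul (Fin.castSucc_lt_last _).ne, boundary_eOS_mul (castSucc_ne_of_mem_ltPairs hp)]
  module

lemma boundary_cOn_mul (x : OS n) :
    boundary n (cOn S * x) = boundaryC S * x + cOn S * boundary n x := by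
  simp only [cOn, boundaryC, Finset.sum_mul, map_sum, ← Finset.sum_add_distrib]
  refine Finset.sum_congr rfl fun p hp ↦ ?_
  simp only [add_mul, sub_mul, mul_sub, smul_mul_assoc, mul_assoc, map_add,
    boundary_eOS_mul (Fin.castSucc_lt_last _).ne, boundary_eOS_mul (castSucc_ne_of_mem_ltPairs hp)]
  module

lemma boundary_cOn_pow (d : ℕ) :
    boundary n (cOn S ^ (d + 1)) = ((d : ℚ) + 1) • (boundaryC S * cOn S ^ d) := by
  induction d with
  | zero => simpa [boundary_one] using boundary_cOn_mul S 1
  | succ d ih =>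
    rw [pow_succ', boundary_cOn_mul, ih, mul_smul_comm, ← mul_assoc, (commute_cOn_boundaryC S).eq,
      mul_assoc, ← pow_succ']
    push_cast
    module

lemma boundary_boundaryC_mul_cOn_pow (d : ℕ) : boundary n (boundaryC S * cOn S ^ d) = 0 := by
  rw [boundary_boundaryC_mul]
  rcases d with _ | d
  · simp [boundary_one]
  · rw [boundary_cOn_pow, mul_smul_comm, ← mul_assoc,
      mul_self_eq_zero_of_mem_OSdeg_one (boundaryC_mem_OSdeg_one S), zero_mul, smul_zero, neg_zero]

lemma boundary_aOn_mul_mOn_mul_cOn_pow (d : ℕ) :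
    (2 : ℚ) • boundary n (aOn S * mOn S * cOn S ^ d) =
      (S.card : ℚ) • (boundaryC S * cOn S ^ d) := by
  rw [← map_smul, ← smul_mul_assoc, two_smul_aOn_mul_mOn, mul_assoc, boundary_mOn_mul,
    boundary_boundaryC_mul_cOn_pow, mul_zero, sub_zero]

end Restricted

lemma boundaryC_univ : boundaryC (Finset.univ : Finset (Fin n)) =
    ((n : ℚ) - 1) • mOS n - (2 : ℚ) • aOS n := by
  simp [boundaryC_eq, aOn, mOn, aOS, mOS, ltPairs]

lemma cOn_univ : cOn (Finset.univ : Finset (Fin n)) = cOS n := by simp [cOn, cOS, ltPairs]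

lemma boundaryC_mul_cOn_pow_mem_subsetPoly (n d : ℕ) :
    (fun S ↦ boundaryC S * cOn S ^ d) ∈ subsetPoly ℚ (Fin n) (OS n) (2 + 2 * d) :=
  subsetPoly.mul_pow_mem (sum_ltPairs_mem_subsetPoly _) (sum_ltPairs_mem_subsetPoly _) d

lemma smul_boundaryC_mul_cOn_pow_eq_zero {d : ℕ} {x y : ℚ}
    (h : x • (aOS n * mOS n * cOS n ^ d) + y • cOS n ^ (d + 1) = 0) (S : Finset (Fin n)) :
    (x * S.card + y * (2 * (d + 1))) • (boundaryC S * cOn S ^ d) = 0 := by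
  have hS := congrArg (fun z ↦ (2 : ℚ) • boundary n (restrict S z)) h
  simp only [map_add, map_smul, map_mul, map_pow, restrict_aOS, restrict_mOS, restrict_cOS,
    smul_add, smul_comm (2 : ℚ), boundary_aOn_mul_mOn_mul_cOn_pow, boundary_cOn_pow, map_zero,
    smul_zero, smul_smul] at hS
  rwa [← add_smul, mul_assoc, mul_comm _ (2 : ℚ)] at hS

lemma sub_smul_aOS_mul_cOS_pow_ne_zero {d : ℕ}
    (h : LinearIndependent ℚ ![aOS n * cOS n ^ d, mOS n * cOS n ^ d]) :
    (((n : ℚ) - 1) • mOS n - (2 : ℚ) • aOS n) * cOS n ^ d ≠ 0 := by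
  intro h0
  have hcomb : (-2 : ℚ) • (aOS n * cOS n ^ d) + ((n : ℚ) - 1) • (mOS n * cOS n ^ d) = 0 := by
    rw [← h0, sub_mul, smul_mul_assoc, smul_mul_assoc, neg_smul, neg_add_eq_sub]
  exact absurd (LinearIndependent.pair_iff.mp h _ _ hcomb).1 (by norm_num)

end OS

open OS in
theorem consecutive_degree_LI_even_general {n d : ℕ} (hd : 2 * d + 2 < n)
    (hne : (((n : ℚ) - 1) • mOS n - (2 : ℚ) • aOS n) * cOS n ^ d ≠ 0) :
    LinearIndependent ℚ ![aOS n * mOS n * cOS n ^ d, cOS n ^ (d + 1)] := by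
  rw [← boundaryC_univ, ← cOn_univ] at hne
  refine LinearIndependent.pair_iff.mpr fun x y hxy ↦ ?_
  have hF := smul_boundaryC_mul_cOn_pow_eq_zero hxy
  have huniv : x * n + y * (2 * (d + 1)) = 0 := by
    simpa using (smul_eq_zero_iff_left hne).mp (hF Finset.univ)
  have hx : x = 0 := by
    by_contra hx
    refine hne (subsetPoly.apply_univ_eq_zero (by simpa [add_comm] using hd)
      (boundaryC_mul_cOn_pow_mem_subsetPoly n d) fun S hS ↦ ?_)
    have hcard : (S.card : ℚ) ≠ n := by
      simpa [← Finset.card_eq_iff_eq_univ] using hS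
    have hcoeff : x * S.card + y * (2 * (d + 1)) ≠ 0 := fun h ↦
      hcard (mul_left_cancel₀ hx (add_right_cancel (h.trans huniv.symm)))
    exact (smul_eq_zero_iff_right hcoeff).mp (hF S)
  have hy : y * (2 * (d + 1)) = 0 := by simpa [hx] using huniv
  exact ⟨hx, (mul_eq_zero_iff_right (by positivity)).mp hy⟩

/-- Let `n ≥ 2` with `n ≠ 3` and let `d ≥ 0`. If `{a·cᵈ, m·cᵈ}` is linearly
independent and `dim (OS_n^{S_n})_{2d+2} ≥ 2`, then `{a·m·cᵈ, c^{d+1}}` is linearly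
independent. -/
theorem consecutive_degree_LI_even (n : ℕ) (hn : 2 ≤ n) (hn3 : n ≠ 3) (d : ℕ)
    (h1 : LinearIndependent ℚ ![aOS n * cOS n ^ d, mOS n * cOS n ^ d])
    (h2 : 2 ≤ Module.finrank ℚ (OSinvDeg n (2*d+2))) :
    LinearIndependent ℚ ![aOS n * mOS n * cOS n ^ d, cOS n ^ (d+1)] :=
  consecutive_degree_LI_even_general (OS.lt_of_two_le_finrank_OSinvDeg h2)
    (OS.sub_smul_aOS_mul_cOS_pow_ne_zero h1)

end
end

section
/- Let n ≥ 2 be an integer with n ≠ 3, and let d ≥ 1 be an integer. If {a·m·c^{d−1}, c^d} is linearly independent over ℚ in OS_n and dim_ℚ (OS_n^{S_n})_{2d+1} ≥ 2, then {a·c^d, m·c^d} is linearly independent over ℚ in OS_n. -/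
/-!
The theorem follows from two facts about `OS_n`.

* In degree at least `n`, the invariants have dimension at most one. Modulo the Orlik–Solomon
  relations, a product of `k` generators is a combination of monomials `e_{r v₁} e_{v₁ v₂} ⋯` of
  paths with `k` edges and without repeated vertices, issued from a fixed root `r`. There is none
  for `k > n`; for `k = n` and `r = n + 1`, they are permuted transitively by `S_n`, so an
  invariant, being equal to its average, is a multiple of the average of any one of them. Hence an
  invariant space of dimension at least two in degree `2d + 1` forces `2d + 2 ≤ n`.

* If `2d + 2 ≤ n`, then `a c^d` and `m c^d` are independent. The homomorphism `e_{ij} ↦ x_{min i j}`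
  to the exterior algebra on `x_1, x_2, …` sends `m` and `a` to independent vectors and `c` to the
  two-form `ω = ∑_{i<j} x_i ∧ x_j` in `n` variables, for which `ω^{d+1} ≠ 0`. If `v ∧ ω^d = 0` for
  some vector `v`, contracting `v ∧ ω^{d+1} = 0` with a linear form `f` gives
  `f(v) ω^{d+1} = 0`, so `v = 0`.
-/

noncomputable section

namespace OrlikSolomon

open ExteriorAlgebra (ι ι_sq_zero ι_add_mul_swap)

section ExteriorAlgebra

variable {R M : Type*} [CommRing R] [AddCommGroup M] [Module R M]

/-- The interior product of an exterior algebra with a linear form, that is, the left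
contraction of the Clifford algebra of the zero quadratic form. -/
def interiorProduct (f : Module.Dual R M) : ExteriorAlgebra R M →ₗ[R] ExteriorAlgebra R M :=
  CliffordAlgebra.contractLeft (Q := 0) f

theorem interiorProduct_ι_mul (f : Module.Dual R M) (v : M) (x : ExteriorAlgebra R M) :
    interiorProduct f (ι R v * x) = f v • x - ι R v * interiorProduct f x :=
  CliffordAlgebra.contractLeft_ι_mul f v x

theorem ι_mul_ι_comm (u v : M) : ι R u * ι R v = -(ι R v * ι R u) :=
  eq_neg_of_add_eq_zero_left (ι_add_mul_swap u v)

theorem ι_mul_ι_mem_exteriorPower_two (u v : M) : ι R u * ι R v ∈ ⋀[R]^2 M := by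
  rw [ExteriorAlgebra.exteriorPower, pow_two]
  exact Submodule.mul_mem_mul ⟨u, rfl⟩ ⟨v, rfl⟩

@[elab_as_elim]
theorem exteriorPower_two_induction {p : ExteriorAlgebra R M → Prop} {ω : ExteriorAlgebra R M}
    (hω : ω ∈ ⋀[R]^2 M) (ι_mul_ι : ∀ u v, p (ι R u * ι R v))
    (add : ∀ x y, p x → p y → p (x + y)) : p ω := by
  rw [ExteriorAlgebra.exteriorPower, pow_two] at hω
  refine Submodule.mul_induction_on hω ?_ add
  rintro _ ⟨u, rfl⟩ _ ⟨v, rfl⟩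
  exact ι_mul_ι u v

theorem commute_of_mem_exteriorPower_two {ω : ExteriorAlgebra R M} (hω : ω ∈ ⋀[R]^2 M)
    (x : ExteriorAlgebra R M) : Commute ω x := by
  induction x using ExteriorAlgebra.induction with
  | algebraMap r => exact (Algebra.commutes r ω).symm
  | mul x y hx hy => exact hx.mul_right hy
  | add x y hx hy => exact hx.add_right hy
  | ι w =>
    refine exteriorPower_two_induction hω (fun u v => ?_) fun _ _ h₁ h₂ => h₁.add_left h₂
    rw [commute_iff_eq, mul_assoc, ι_mul_ι_comm v w, mul_neg, ← mul_assoc, ι_mul_ι_comm u w,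
      neg_mul, neg_neg, mul_assoc]

theorem interiorProduct_ι_mul_ι (f : Module.Dual R M) (u v : M) :
    interiorProduct f (ι R u * ι R v) = f u • ι R v - f v • ι R u := by
  have hv : interiorProduct f (ι R v) = algebraMap R _ (f v) := CliffordAlgebra.contractLeft_ι 0 f v
  rw [interiorProduct_ι_mul, hv, ← Algebra.commutes, ← Algebra.smul_def]

theorem interiorProduct_mul_of_mem_exteriorPower_two (f : Module.Dual R M) {ω : ExteriorAlgebra R M}
    (hω : ω ∈ ⋀[R]^2 M) (x : ExteriorAlgebra R M) :
    interiorProduct f (ω * x) = interiorProduct f ω * x + ω * interiorProduct f x := by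
  refine exteriorPower_two_induction hω (fun u v => ?_) fun ω₁ ω₂ h₁ h₂ => ?_
  · rw [interiorProduct_ι_mul_ι, mul_assoc, interiorProduct_ι_mul, interiorProduct_ι_mul, mul_sub,
      sub_mul, mul_smul_comm, smul_mul_assoc, smul_mul_assoc, mul_assoc]
    abel
  · simp only [add_mul, map_add, h₁, h₂]
    abel

theorem interiorProduct_pow_succ (f : Module.Dual R M) {ω : ExteriorAlgebra R M} (hω : ω ∈ ⋀[R]^2 M)
    (k : ℕ) : interiorProduct f (ω ^ (k + 1)) = (k + 1) • (interiorProduct f ω * ω ^ k) := by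
  induction k with
  | zero => simp
  | succ k ih =>
    have hcomm := (commute_of_mem_exteriorPower_two hω (interiorProduct f ω)).eq
    rw [pow_succ' ω (k + 1), interiorProduct_mul_of_mem_exteriorPower_two f hω, ih, mul_smul_comm,
      ← mul_assoc ω, hcomm, mul_assoc, ← pow_succ', succ_nsmul' _ (k + 1)]

theorem interiorProduct_pow_eq_zero (f : Module.Dual R M) {ω : ExteriorAlgebra R M}
    (hω : ω ∈ ⋀[R]^2 M) (h : interiorProduct f ω = 0) (k : ℕ) : interiorProduct f (ω ^ k) = 0 := by
  cases k with
  | zero =>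
    rw [pow_zero]
    exact CliffordAlgebra.contractLeft_one 0 f
  | succ k => rw [interiorProduct_pow_succ f hω, h, zero_mul, smul_zero]

theorem pow_eq_zero_of_ι_mul_pow_eq_zero (f : Module.Dual R M) {v : M} (hv : f v = 1)
    {ω : ExteriorAlgebra R M} (hω : ω ∈ ⋀[R]^2 M) (hfω : interiorProduct f ω = 0) {k : ℕ}
    (h : ι R v * ω ^ k = 0) : ω ^ k = 0 := by
  have hι := interiorProduct_ι_mul f v (ω ^ k)
  rwa [h, map_zero, interiorProduct_pow_eq_zero f hω hfω, mul_zero, sub_zero, hv, one_smul,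
    eq_comm] at hι

theorem smul_pow_succ_eq_zero_of_ι_mul_pow_eq_zero (f : Module.Dual R M) {v : M}
    {ω : ExteriorAlgebra R M} (hω : ω ∈ ⋀[R]^2 M) {d : ℕ} (h : ι R v * ω ^ d = 0) :
    f v • ω ^ (d + 1) = 0 := by
  have hpow : ι R v * ω ^ (d + 1) = 0 := by rw [pow_succ, ← mul_assoc, h, zero_mul]
  have hcomm : Commute (ω ^ d) (interiorProduct f ω) :=
    (commute_of_mem_exteriorPower_two hω _).pow_left d
  have hι := interiorProduct_ι_mul f v (ω ^ (d + 1))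
  rwa [hpow, map_zero, interiorProduct_pow_succ f hω, ← hcomm.eq, mul_smul_comm, ← mul_assoc, h,
    zero_mul, smul_zero, sub_zero, eq_comm] at hι

theorem ι_min_relation {α : Type*} [LinearOrder α] (x : α → M) (i j k : α) :
    ι R (x (min i k)) * ι R (x (min j k)) - ι R (x (min i j)) * ι R (x (min j k)) +
      ι R (x (min i j)) * ι R (x (min i k)) = 0 := by
  have hmin : (i ≤ j ∧ i ≤ k) ∨ (j ≤ i ∧ j ≤ k) ∨ (k ≤ i ∧ k ≤ j) := by grind
  rcases hmin with ⟨hij, hik⟩ | ⟨hji, hjk⟩ | ⟨hki, hkj⟩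
  · rw [min_eq_left hij, min_eq_left hik, ι_sq_zero, sub_self, add_zero]
  · rw [min_eq_right hji, min_eq_left hjk, ι_sq_zero, sub_zero, ι_add_mul_swap]
  · rw [min_eq_right hki, min_eq_right hkj, ι_sq_zero, zero_sub, neg_add_cancel]

end ExteriorAlgebra

theorem mul_pow_eq_mul_pow {α : Type*} [Monoid α] {s a b : α} (hb : Commute s b)
    (h : s * a = s * b) (k : ℕ) : s * a ^ k = s * b ^ k := by
  induction k with
  | zero => simp
  | succ k ih =>
    rw [pow_succ' a, ← mul_assoc, h, hb.eq, mul_assoc, ih, ← mul_assoc, ← hb.eq, mul_assoc,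
      ← pow_succ']

section PairForm

variable (K : Type*) [Field K]

/-- The `m`-th coordinate form on `K^(ℕ)`. -/
abbrev coord (m : ℕ) : Module.Dual K (ℕ →₀ K) :=
  Finsupp.lapply m

/-- The vector `x₀ + ⋯ + x_{m-1}`, where `x` is the standard basis of `K^(ℕ)`. -/
def partialSum (m : ℕ) : ℕ →₀ K :=
  ∑ i ∈ Finset.range m, Finsupp.single i 1

/-- The two-form `∑_{i < j < m} xᵢ ∧ xⱼ`, where `x` is the standard basis of `K^(ℕ)`. It is the
image of `c` under `minHom`. -/
def pairForm (m : ℕ) : ExteriorAlgebra K (ℕ →₀ K) :=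
  ∑ j ∈ Finset.range m, ι K (partialSum K j) * ι K (Finsupp.single j 1)

variable {K}

theorem partialSum_apply (m i : ℕ) : partialSum K m i = if i < m then 1 else 0 := by
  simp [partialSum, Finsupp.finsetSum_apply, Finsupp.single_apply]

theorem partialSum_succ (m : ℕ) :
    partialSum K (m + 1) = partialSum K m + Finsupp.single m 1 :=
  Finset.sum_range_succ _ m

theorem sum_range_partialSum_apply (m i : ℕ) :
    (∑ j ∈ Finset.range m, partialSum K j) i = (m - (i + 1) : ℕ) := by
  have hIco : (Finset.range m).filter (i < ·) = Finset.Ico (i + 1) m := by grind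
  simp only [Finsupp.finsetSum_apply, partialSum_apply]
  rw [Finset.sum_boole, hIco, Nat.card_Ico]

theorem linearIndependent_sum_partialSum_partialSum (m : ℕ) :
    LinearIndependent K ![∑ j ∈ Finset.range (m + 2), partialSum K j, partialSum K (m + 2)] := by
  refine LinearIndependent.pair_iff.2 fun x y h => ?_
  have hcoord (i : ℕ) := DFunLike.congr_fun h i
  simp only [Finsupp.add_apply, Finsupp.smul_apply, sum_range_partialSum_apply, partialSum_apply,
    Finsupp.zero_apply, smul_eq_mul] at hcoord
  have hy : y = 0 := by simpa using hcoord (m + 1)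
  have hx : x = 0 := by simpa [hy] using hcoord m
  exact ⟨hx, hy⟩

theorem pairForm_succ (m : ℕ) : pairForm K (m + 1) =
    pairForm K m + ι K (partialSum K m) * ι K (Finsupp.single m 1) :=
  Finset.sum_range_succ _ m

theorem pairForm_mem_exteriorPower_two (m : ℕ) : pairForm K m ∈ ⋀[K]^2 (ℕ →₀ K) :=
  Submodule.sum_mem _ fun _ _ => ι_mul_ι_mem_exteriorPower_two _ _

theorem interiorProduct_coord_pairForm (m : ℕ) :
    interiorProduct (coord K m) (pairForm K m) = 0 := by
  rw [pairForm, map_sum]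
  refine Finset.sum_eq_zero fun j hj => ?_
  have hj : j < m := Finset.mem_range.1 hj
  simp [interiorProduct_ι_mul_ι, partialSum_apply, hj.ne, hj.not_gt]

theorem interiorProduct_coord_pairForm_succ (m : ℕ) :
    interiorProduct (coord K m) (pairForm K (m + 1)) = -ι K (partialSum K m) := by
  simp [pairForm_succ, interiorProduct_coord_pairForm, interiorProduct_ι_mul_ι, partialSum_apply]

theorem ι_single_mul_pairForm_succ (m : ℕ) :
    ι K (Finsupp.single m 1) * pairForm K (m + 1) = ι K (Finsupp.single m 1) * pairForm K m := by
  rw [pairForm_succ, ι_mul_ι_comm, mul_add, mul_neg, ← mul_assoc, ι_sq_zero, zero_mul, neg_zero,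
    add_zero]

theorem ι_partialSum_mul_pairForm_succ (m : ℕ) :
    ι K (partialSum K m) * pairForm K (m + 1) = ι K (partialSum K m) * pairForm K m := by
  rw [pairForm_succ, mul_add, ← mul_assoc, ι_sq_zero, zero_mul, add_zero]

theorem ι_partialSum_succ_mul_pairForm_succ (m : ℕ) :
    ι K (partialSum K (m + 1)) * pairForm K (m + 1) =
      ι K (partialSum K (m + 1)) * pairForm K m := by
  have h : ι K (partialSum K m) * ι K (Finsupp.single m 1) =
      ι K (partialSum K (m + 1)) * ι K (Finsupp.single m 1) := by
    rw [partialSum_succ, map_add, add_mul, ι_sq_zero, add_zero]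
  rw [pairForm_succ, h, mul_add, ← mul_assoc, ι_sq_zero, zero_mul, add_zero]

theorem pairForm_succ_pow_ne_zero {m k : ℕ} (h : pairForm K m ^ k ≠ 0) :
    pairForm K (m + 1) ^ k ≠ 0 := by
  intro h0
  have hω := pairForm_mem_exteriorPower_two (K := K) m
  have hmul : ι K (Finsupp.single m 1) * pairForm K m ^ k = 0 := by
    rw [← mul_pow_eq_mul_pow (commute_of_mem_exteriorPower_two hω _).symm
      (ι_single_mul_pairForm_succ m), h0, mul_zero]
  exact h (pow_eq_zero_of_ι_mul_pow_eq_zero (coord K m) Finsupp.single_eq_same hω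
    (interiorProduct_coord_pairForm m) hmul)

theorem pairForm_add_two_pow_succ_ne_zero [CharZero K] {m k : ℕ} (h : pairForm K m ^ k ≠ 0) :
    pairForm K (m + 2) ^ (k + 1) ≠ 0 := by
  intro h0
  have hω := pairForm_mem_exteriorPower_two (K := K)
  have hmul₂ : ι K (partialSum K (m + 1)) * pairForm K (m + 2) ^ k = 0 := by
    have := interiorProduct_pow_succ (coord K (m + 1)) (hω (m + 2)) k
    rw [h0, map_zero, interiorProduct_coord_pairForm_succ, neg_mul, smul_neg, eq_comm, neg_eq_zero,
      ← Nat.cast_smul_eq_nsmul K, smul_eq_zero] at this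
    exact this.resolve_left (Nat.cast_ne_zero.2 k.succ_ne_zero)
  have hmul : ι K (partialSum K (m + 1)) * pairForm K m ^ k = 0 := by
    rw [← mul_pow_eq_mul_pow (commute_of_mem_exteriorPower_two (hω m) _).symm
      ((ι_partialSum_mul_pairForm_succ (m + 1)).trans (ι_partialSum_succ_mul_pairForm_succ m)),
      hmul₂]
  have hv : partialSum K (m + 1) m = 1 := by rw [partialSum_apply, if_pos m.lt_succ_self]
  exact h (pow_eq_zero_of_ι_mul_pow_eq_zero (coord K m) hv (hω m)
    (interiorProduct_coord_pairForm m) hmul)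

theorem pairForm_pow_ne_zero [CharZero K] {m k : ℕ} (h : 2 * k ≤ m) : pairForm K m ^ k ≠ 0 := by
  induction m, h using Nat.le_induction with
  | succ m _ ih => exact pairForm_succ_pow_ne_zero ih
  | base =>
    induction k with
    | zero =>
      rw [pow_zero]
      exact one_ne_zero
    | succ k ih => exact pairForm_add_two_pow_succ_ne_zero ih

theorem eq_zero_of_ι_mul_pairForm_pow_eq_zero [CharZero K] {m d : ℕ} (hm : 2 * d + 2 ≤ m)
    {v : ℕ →₀ K} (h : ι K v * pairForm K m ^ d = 0) : v = 0 := by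
  ext i
  have := smul_pow_succ_eq_zero_of_ι_mul_pow_eq_zero (coord K i)
    (pairForm_mem_exteriorPower_two m) h
  exact (smul_eq_zero.1 this).resolve_right (pairForm_pow_ne_zero hm)

end PairForm

section Relations

variable {n : ℕ}

theorem eOS_self (i : Fin (n + 1)) : eOS n i i = 0 :=
  dif_pos rfl

theorem eOS_of_ne {i j : Fin (n + 1)} (h : i ≠ j) :
    eOS n i j = RingQuot.mkAlgHom ℚ (OSRel n) (eAmb n i j h) :=
  dif_neg h

theorem eOS_comm (i j : Fin (n + 1)) : eOS n i j = eOS n j i := by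
  by_cases h : i = j
  · rw [h]
  · rw [eOS_of_ne h, eOS_of_ne (Ne.symm h), eAmb, eAmb]
    congr 4
    exact Sym2.eq_swap

theorem exists_eOS_eq_mkAlgHom_ι (i j : Fin (n + 1)) :
    ∃ v, eOS n i j = RingQuot.mkAlgHom ℚ (OSRel n) (ι ℚ v) := by
  by_cases h : i = j
  · exact ⟨0, by rw [h, eOS_self, map_zero, map_zero]⟩
  · exact ⟨_, eOS_of_ne h⟩

theorem eOS_mul_eOS_comm (i j k l : Fin (n + 1)) :
    eOS n i j * eOS n k l = -(eOS n k l * eOS n i j) := by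
  obtain ⟨u, hu⟩ := exists_eOS_eq_mkAlgHom_ι i j
  obtain ⟨v, hv⟩ := exists_eOS_eq_mkAlgHom_ι k l
  rw [hu, hv, ← map_mul, ι_mul_ι_comm, map_neg, map_mul]

theorem eOS_mul_self (i j : Fin (n + 1)) : eOS n i j * eOS n i j = 0 := by
  obtain ⟨v, hv⟩ := exists_eOS_eq_mkAlgHom_ι i j
  rw [hv, ← map_mul, ι_sq_zero, map_zero]

theorem eOS_mul_eOS (i j k : Fin (n + 1)) :
    eOS n i k * eOS n j k = eOS n i j * eOS n j k - eOS n i j * eOS n i k := by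
  by_cases hij : i = j
  · simp [hij, eOS_self, eOS_mul_self]
  by_cases hjk : j = k
  · simp [hjk, eOS_self, eOS_mul_self]
  by_cases hik : i = k
  · simp [hik, eOS_self, eOS_comm j k, eOS_mul_self]
  have := RingQuot.mkAlgHom_rel ℚ (OSRel.rel i j k hij hjk hik)
  rw [map_add, map_sub, map_mul, map_mul, map_mul, map_zero, ← eOS_of_ne, ← eOS_of_ne,
    ← eOS_of_ne, sub_add, sub_eq_zero] at this
  exact this

theorem algHom_ext {A : Type*} [Semiring A] [Algebra ℚ A] {f g : OS n →ₐ[ℚ] A}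
    (h : ∀ i j, f (eOS n i j) = g (eOS n i j)) : f = g := by
  refine RingQuot.ringQuot_ext' _ f g (ExteriorAlgebra.hom_ext (Finsupp.lhom_ext' ?_))
  rintro ⟨⟨i, j⟩, hij⟩
  have hne : i ≠ j := fun h => hij (Sym2.mk_isDiag_iff.2 h)
  have := h i j
  rw [eOS_of_ne hne] at this
  exact LinearMap.ext_ring this

end Relations

section MinHom

/-- The homomorphism `e_{ij} ↦ x_{min i j}` from the ambient exterior algebra of `OS_n` to the
exterior algebra on the standard basis `x` of `ℚ^(ℕ)`. -/
def minHomAmb (n : ℕ) : OSamb n →ₐ[ℚ] ExteriorAlgebra ℚ (ℕ →₀ ℚ) :=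
  ExteriorAlgebra.map (Finsupp.lmapDomain ℚ ℚ fun s : OSidx n => (s.1.inf : Fin (n + 1)).val)

theorem minHomAmb_eAmb {n : ℕ} {i j : Fin (n + 1)} (h : i ≠ j) :
    minHomAmb n (eAmb n i j h) = ι ℚ (Finsupp.single (min i j).val 1) := by
  rw [minHomAmb, eAmb, ExteriorAlgebra.map_apply_ι, Finsupp.lmapDomain_apply,
    Finsupp.mapDomain_single, Sym2.inf_mk]

/-- The homomorphism `e_{ij} ↦ x_{min i j}` from `OS_n` to the exterior algebra on the standard
basis `x` of `ℚ^(ℕ)`, which detects linear independence in `OS_n`. -/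
def minHom (n : ℕ) : OS n →ₐ[ℚ] ExteriorAlgebra ℚ (ℕ →₀ ℚ) :=
  RingQuot.liftAlgHom ℚ ⟨minHomAmb n, by
    rintro _ _ ⟨i, j, k, hij, hjk, hik⟩
    rw [map_add, map_sub, map_mul, map_mul, map_mul, map_zero, minHomAmb_eAmb, minHomAmb_eAmb,
      minHomAmb_eAmb]
    exact ι_min_relation (fun i : Fin (n + 1) => Finsupp.single i.val 1) i j k⟩

variable {n : ℕ}

theorem minHom_eOS {i j : Fin (n + 1)} (h : i < j) :
    minHom n (eOS n i j) = ι ℚ (Finsupp.single i.val 1) := by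
  rw [eOS_of_ne h.ne, minHom, RingQuot.liftAlgHom_mkAlgHom_apply, minHomAmb_eAmb,
    min_eq_left h.le]

theorem minHom_mOS : minHom n (mOS n) = ι ℚ (partialSum ℚ n) := by
  simp only [mOS, partialSum, map_sum, minHom_eOS, Fin.castSucc_lt_last, Fin.val_castSucc]
  exact Fin.sum_univ_eq_sum_range (fun i => ι ℚ (Finsupp.single i 1)) n

theorem sum_filter_lt_eq_sum_range_sum_range {A : Type*} [AddCommMonoid A] (n : ℕ)
    (f : ℕ → ℕ → A) :
    ∑ p ∈ Finset.univ.filter (fun p : Fin n × Fin n => p.1 < p.2), f p.1 p.2 =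
      ∑ j ∈ Finset.range n, ∑ i ∈ Finset.range j, f i j := by
  rw [Finset.sum_filter, Fintype.sum_prod_type_right, ← Fin.sum_univ_eq_sum_range]
  refine Finset.sum_congr rfl fun j _ => ?_
  have hrange : Finset.range j = (Finset.range n).filter (· < j.val) := by grind
  rw [hrange, Finset.sum_filter]
  exact Fin.sum_univ_eq_sum_range (fun i => if i < j.val then f i j else 0) n

theorem minHom_aOS : minHom n (aOS n) = ι ℚ (∑ j ∈ Finset.range n, partialSum ℚ j) := by
  simp only [partialSum, map_sum]
  rw [← sum_filter_lt_eq_sum_range_sum_range n fun i _ => ι ℚ (Finsupp.single i 1), aOS, map_sum]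
  refine Finset.sum_congr rfl fun p hp => ?_
  rw [minHom_eOS (Fin.castSucc_lt_castSucc_iff.2 (Finset.mem_filter.1 hp).2), Fin.val_castSucc]

theorem minHom_cOS : minHom n (cOS n) = pairForm ℚ n := by
  simp only [pairForm, partialSum, map_sum, Finset.sum_mul]
  rw [← sum_filter_lt_eq_sum_range_sum_range n fun i j =>
    ι ℚ (Finsupp.single i 1) * ι ℚ (Finsupp.single j 1), cOS, map_sum]
  refine Finset.sum_congr rfl fun p hp => ?_
  rw [map_add, map_mul, map_mul,
    minHom_eOS (Fin.castSucc_lt_castSucc_iff.2 (Finset.mem_filter.1 hp).2),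
    minHom_eOS (Fin.castSucc_lt_last _), minHom_eOS (Fin.castSucc_lt_last _), ι_sq_zero, zero_add,
    Fin.val_castSucc, Fin.val_castSucc]

theorem linearIndependent_aOS_mul_cOS_pow_mOS_mul_cOS_pow {d : ℕ} (h : 2 * d + 2 ≤ n) :
    LinearIndependent ℚ ![aOS n * cOS n ^ d, mOS n * cOS n ^ d] := by
  refine LinearIndependent.pair_iff.2 fun x y hxy => ?_
  apply_fun minHom n at hxy
  simp only [map_add, map_smul, map_mul, map_pow, map_zero, minHom_aOS, minHom_mOS, minHom_cOS,
    ← smul_mul_assoc, ← add_mul] at hxy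
  rw [← map_smul, ← map_smul, ← map_add] at hxy
  obtain ⟨m, rfl⟩ := Nat.exists_eq_add_of_le' (le_add_self.trans h)
  have hv := eq_zero_of_ι_mul_pairForm_pow_eq_zero h hxy
  have hli := linearIndependent_sum_partialSum_partialSum (K := ℚ) m
  exact LinearIndependent.pair_iff.1 hli x y hv

end MinHom

section Path

variable {n : ℕ}

/-- The monomial `e_{r v₁} e_{v₁ v₂} ⋯` attached to the path `r, v₁, v₂, …`; the initial vertex `r`
is kept apart from the list of the remaining ones. -/
def pathOS (n : ℕ) : Fin (n + 1) → List (Fin (n + 1)) → OS n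
  | _, [] => 1
  | r, v :: l => eOS n r v * pathOS n v l

theorem pathOS_nil (r : Fin (n + 1)) : pathOS n r [] = 1 :=
  rfl

theorem pathOS_cons (r v : Fin (n + 1)) (l : List (Fin (n + 1))) :
    pathOS n r (v :: l) = eOS n r v * pathOS n v l :=
  rfl

theorem exists_pathOS_mul_eOS (r : Fin (n + 1)) (l : List (Fin (n + 1))) :
    ∃ ε : ℚ, ∀ i j, pathOS n r l * eOS n i j = ε • (eOS n i j * pathOS n r l) := by
  induction l generalizing r with
  | nil => exact ⟨1, by simp [pathOS_nil]⟩
  | cons v l ih =>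
    obtain ⟨ε, h⟩ := ih v
    refine ⟨-ε, fun i j => ?_⟩
    rw [pathOS_cons, mul_assoc, h, mul_smul_comm, ← mul_assoc, eOS_mul_eOS_comm, neg_mul,
      smul_neg, neg_smul, mul_assoc]

theorem OSperm_eOS (σ : Equiv.Perm (Fin (n + 1))) (i j : Fin (n + 1)) :
    OSperm n σ (eOS n i j) = eOS n (σ i) (σ j) := by
  by_cases h : i = j
  · rw [h, eOS_self, eOS_self, map_zero]
  · rw [eOS_of_ne h, eOS_of_ne (σ.injective.ne h), OSperm, RingQuot.liftAlgHom_mkAlgHom_apply,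
      AlgHom.comp_apply, OSpermAmb_e]

theorem OSperm_pathOS (σ : Equiv.Perm (Fin (n + 1))) (r : Fin (n + 1)) (l : List (Fin (n + 1))) :
    OSperm n σ (pathOS n r l) = pathOS n (σ r) (l.map σ) := by
  induction l generalizing r with
  | nil => exact map_one _
  | cons v l ih => rw [pathOS_cons, map_mul, OSperm_eOS, ih, List.map_cons, pathOS_cons]

/-- The span of the monomials of the paths from `r` through all vertices of `l`, in any order. -/
def pathSpan (n : ℕ) (r : Fin (n + 1)) (l : List (Fin (n + 1))) : Submodule ℚ (OS n) :=
  Submodule.span ℚ (pathOS n r '' {l' | l'.Perm l})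

theorem pathOS_mem_pathSpan (r : Fin (n + 1)) (l : List (Fin (n + 1))) :
    pathOS n r l ∈ pathSpan n r l :=
  Submodule.subset_span ⟨l, List.Perm.refl l, rfl⟩

theorem pathSpan_congr {r : Fin (n + 1)} {l l' : List (Fin (n + 1))} (h : l.Perm l') :
    pathSpan n r l = pathSpan n r l' := by
  have hset : {k : List (Fin (n + 1)) | k.Perm l} = {k | k.Perm l'} :=
    Set.ext fun _ => ⟨fun hk => hk.trans h, fun hk => hk.trans h.symm⟩
  rw [pathSpan, pathSpan, hset]

theorem eOS_mul_mem_pathSpan {r v : Fin (n + 1)} {l : List (Fin (n + 1))} {x : OS n}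
    (hx : x ∈ pathSpan n v l) : eOS n r v * x ∈ pathSpan n r (v :: l) := by
  have hle : (pathSpan n v l).map (LinearMap.mulLeft ℚ (eOS n r v)) ≤ pathSpan n r (v :: l) := by
    rw [pathSpan, Submodule.map_span_le]
    rintro _ ⟨l', hl', rfl⟩
    exact Submodule.subset_span ⟨v :: l', hl'.cons v, rfl⟩
  exact hle ⟨x, hx, rfl⟩

theorem pathOS_mul_eOS_self_mem_pathSpan (r t : Fin (n + 1)) (l : List (Fin (n + 1))) :
    pathOS n r l * eOS n r t ∈ pathSpan n r (t :: l) := by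
  induction l generalizing r with
  | nil =>
    rw [pathOS_nil, one_mul, ← mul_one (eOS n r t), ← pathOS_nil t, ← pathOS_cons]
    exact pathOS_mem_pathSpan r [t]
  | cons v l ih =>
    obtain ⟨ε, hε⟩ := exists_pathOS_mul_eOS v l
    have hrel : eOS n r v * eOS n r t = eOS n r v * eOS n v t - eOS n r t * eOS n t v := by
      rw [eOS_comm t v, eOS_mul_eOS, sub_sub_cancel]
    have hpath : pathOS n r (v :: l) * eOS n r t =
        eOS n r v * (pathOS n v l * eOS n v t) - ε • pathOS n r (t :: v :: l) := by
      rw [pathOS_cons, mul_assoc, hε, hε, pathOS_cons, pathOS_cons, mul_smul_comm, mul_smul_comm,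
        ← smul_sub, ← mul_assoc, hrel, sub_mul, mul_assoc, mul_assoc]
    rw [hpath]
    refine sub_mem ?_ (Submodule.smul_mem _ _ (pathOS_mem_pathSpan r _))
    rw [pathSpan_congr (List.Perm.swap v t l)]
    exact eOS_mul_mem_pathSpan (ih v)

theorem pathOS_mul_eOS_mem_pathSpan {r v : Fin (n + 1)} {l : List (Fin (n + 1))}
    (hv : v ∈ r :: l) (t : Fin (n + 1)) : pathOS n r l * eOS n v t ∈ pathSpan n r (t :: l) := by
  induction l generalizing r with
  | nil =>
    rw [List.mem_singleton.1 hv]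
    exact pathOS_mul_eOS_self_mem_pathSpan r t []
  | cons w l ih =>
    rcases List.mem_cons.1 hv with rfl | hv
    · exact pathOS_mul_eOS_self_mem_pathSpan v t _
    · rw [pathOS_cons, mul_assoc, pathSpan_congr (List.Perm.swap w t l)]
      exact eOS_mul_mem_pathSpan (ih hv)

end Path

section Span

theorem add_pow_succ_le {α : Type*} [IdemSemiring α] {a b : α} (hba : b * a ≤ a * b)
    (hbb : b * b ≤ a * b) (k : ℕ) : (a + b) ^ (k + 1) ≤ a ^ (k + 1) + a ^ k * b := by
  have hb : b * (a + b) ≤ a * b := by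
    rw [mul_add]
    exact add_le hba hbb
  induction k with
  | zero => simp
  | succ k ih =>
    calc (a + b) ^ (k + 2) ≤ (a ^ (k + 1) + a ^ k * b) * (a + b) := by
          rw [pow_succ]
          gcongr
      _ = a ^ (k + 2) + a ^ (k + 1) * b + a ^ k * (b * (a + b)) := by
          rw [add_mul, mul_add, ← pow_succ, mul_assoc (a ^ k)]
      _ ≤ a ^ (k + 2) + a ^ (k + 1) * b + a ^ k * (a * b) := by gcongr
      _ = a ^ (k + 2) + a ^ (k + 1) * b := by
          rw [← mul_assoc, ← pow_succ, add_assoc, add_idem]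

variable {n : ℕ}

/-- The span of the generators `e_{ij}` with both ends in `S`. -/
def genSpan (n : ℕ) (S : Set (Fin (n + 1))) : Submodule ℚ (OS n) :=
  Submodule.span ℚ (Set.image2 (eOS n) S S)

/-- The span of the generators `e_{it}` joining `t` to a vertex `i` of `S`. -/
def starSpan (n : ℕ) (t : Fin (n + 1)) (S : Set (Fin (n + 1))) : Submodule ℚ (OS n) :=
  Submodule.span ℚ ((eOS n · t) '' S)

theorem eOS_mem_genSpan {S : Set (Fin (n + 1))} {i j : Fin (n + 1)} (hi : i ∈ S) (hj : j ∈ S) :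
    eOS n i j ∈ genSpan n S :=
  Submodule.subset_span ⟨i, hi, j, hj, rfl⟩

theorem eOS_mem_starSpan {S : Set (Fin (n + 1))} {i : Fin (n + 1)} (hi : i ∈ S)
    (t : Fin (n + 1)) : eOS n i t ∈ starSpan n t S :=
  Submodule.subset_span ⟨i, hi, rfl⟩

theorem genSpan_singleton (r : Fin (n + 1)) : genSpan n {r} = 0 := by
  simp [genSpan, eOS_self]

theorem genSpan_insert_le (t : Fin (n + 1)) (S : Set (Fin (n + 1))) :
    genSpan n (insert t S) ≤ genSpan n S + starSpan n t S := by
  refine Submodule.span_le.2 ?_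
  rintro _ ⟨i, rfl | hi, j, rfl | hj, rfl⟩
  · rw [eOS_self]
    exact zero_mem _
  · rw [eOS_comm]
    exact Submodule.mem_sup_right (eOS_mem_starSpan hj i)
  · exact Submodule.mem_sup_right (eOS_mem_starSpan hi j)
  · exact Submodule.mem_sup_left (eOS_mem_genSpan hi hj)

theorem starSpan_mul_genSpan_le (t : Fin (n + 1)) (S : Set (Fin (n + 1))) :
    starSpan n t S * genSpan n S ≤ genSpan n S * starSpan n t S := by
  rw [starSpan, genSpan, Submodule.span_mul_span, Submodule.span_le]
  rintro _ ⟨_, ⟨i, hi, rfl⟩, _, ⟨j, hj, k, hk, rfl⟩, rfl⟩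
  simp only [eOS_mul_eOS_comm i t]
  exact neg_mem (Submodule.mul_mem_mul (eOS_mem_genSpan hj hk) (eOS_mem_starSpan hi t))

theorem starSpan_mul_starSpan_le (t : Fin (n + 1)) (S : Set (Fin (n + 1))) :
    starSpan n t S * starSpan n t S ≤ genSpan n S * starSpan n t S := by
  rw [starSpan, Submodule.span_mul_span, Submodule.span_le]
  rintro _ ⟨_, ⟨i, hi, rfl⟩, _, ⟨j, hj, rfl⟩, rfl⟩
  simp only [eOS_mul_eOS i j t]
  exact sub_mem (Submodule.mul_mem_mul (eOS_mem_genSpan hi hj) (eOS_mem_starSpan hj t))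
    (Submodule.mul_mem_mul (eOS_mem_genSpan hi hj) (eOS_mem_starSpan hi t))

theorem genSpan_insert_pow_succ_le (t : Fin (n + 1)) (S : Set (Fin (n + 1))) (k : ℕ) :
    genSpan n (insert t S) ^ (k + 1) ≤ genSpan n S ^ (k + 1) + genSpan n S ^ k * starSpan n t S :=
  (pow_le_pow_left' (genSpan_insert_le t S) _).trans
    (add_pow_succ_le (starSpan_mul_genSpan_le t S) (starSpan_mul_starSpan_le t S) k)

theorem pathSpan_mul_starSpan_le (r t : Fin (n + 1)) (l : List (Fin (n + 1))) :
    pathSpan n r l * starSpan n t {v | v ∈ r :: l} ≤ pathSpan n r (t :: l) := by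
  rw [pathSpan, starSpan, Submodule.span_mul_span, Submodule.span_le]
  rintro _ ⟨_, ⟨l', hl', rfl⟩, _, ⟨v, hv, rfl⟩, rfl⟩
  rw [← pathSpan_congr (List.Perm.cons t hl')]
  exact pathOS_mul_eOS_mem_pathSpan ((List.Perm.cons r hl').mem_iff.2 hv) t

theorem setOf_mem_cons_cons (r t : Fin (n + 1)) (l : List (Fin (n + 1))) :
    {v | v ∈ r :: t :: l} = insert t {v | v ∈ r :: l} :=
  Set.ext fun v => by simp [or_left_comm]

theorem genSpan_pow_succ_length_eq_zero (r : Fin (n + 1)) (l : List (Fin (n + 1))) :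
    genSpan n {v | v ∈ r :: l} ^ (l.length + 1) = 0 := by
  induction l with
  | nil => simp [genSpan_singleton]
  | cons t l ih =>
    have hle := genSpan_insert_pow_succ_le t {v | v ∈ r :: l} (l.length + 1)
    rw [pow_succ (genSpan n {v | v ∈ r :: l}) (l.length + 1), ih, zero_mul, zero_mul, add_zero,
      ← setOf_mem_cons_cons] at hle
    exact le_bot_iff.1 hle

theorem genSpan_pow_length_le_pathSpan (r : Fin (n + 1)) (l : List (Fin (n + 1))) :
    genSpan n {v | v ∈ r :: l} ^ l.length ≤ pathSpan n r l := by
  induction l with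
  | nil =>
    rw [List.length_nil, pow_zero, Submodule.one_le]
    exact pathOS_mem_pathSpan r []
  | cons t l ih =>
    rw [setOf_mem_cons_cons, List.length_cons]
    calc genSpan n (insert t {v | v ∈ r :: l}) ^ (l.length + 1)
        ≤ genSpan n {v | v ∈ r :: l} ^ (l.length + 1) +
          genSpan n {v | v ∈ r :: l} ^ l.length * starSpan n t {v | v ∈ r :: l} :=
          genSpan_insert_pow_succ_le t _ _
      _ = genSpan n {v | v ∈ r :: l} ^ l.length * starSpan n t {v | v ∈ r :: l} := by
          rw [genSpan_pow_succ_length_eq_zero, zero_add]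
      _ ≤ pathSpan n r l * starSpan n t {v | v ∈ r :: l} := mul_le_mul_left ih _
      _ ≤ pathSpan n r (t :: l) := pathSpan_mul_starSpan_le r t l

theorem OSdeg_le_genSpan_univ_pow (n k : ℕ) : OSdeg n k ≤ genSpan n Set.univ ^ k := by
  rw [OSdeg, Submodule.map_pow, ← LinearMap.range_comp]
  refine pow_le_pow_left' ?_ k
  rw [LinearMap.range_le_iff_comap, eq_top_iff, ← Finsupp.basisSingleOne.span_eq,
    Submodule.span_le]
  rintro _ ⟨⟨⟨i, j⟩, hij⟩, rfl⟩
  have hne : i ≠ j := fun h => hij (Sym2.mk_isDiag_iff.2 h)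
  have hmem := eOS_mem_genSpan (Set.mem_univ i) (Set.mem_univ j)
  rw [eOS_of_ne hne] at hmem
  rw [Finsupp.coe_basisSingleOne]
  exact hmem

end Span

section Invariants

theorem OSperm_one (n : ℕ) : OSperm n 1 = AlgHom.id ℚ (OS n) :=
  algHom_ext fun i j => OSperm_eOS 1 i j

theorem OSperm_mul {n : ℕ} (σ τ : Equiv.Perm (Fin (n + 1))) :
    OSperm n (σ * τ) = (OSperm n σ).comp (OSperm n τ) :=
  algHom_ext fun i j => by simp only [AlgHom.comp_apply, OSperm_eOS, Equiv.Perm.mul_apply]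

/-- The representation of `S_n`, the stabilizer of the last point, on `OS_n`. -/
def OSrep (n : ℕ) :
    Representation ℚ (MulAction.stabilizer (Equiv.Perm (Fin (n + 1))) (Fin.last n)) (OS n) where
  toFun σ := (OSperm n σ).toLinearMap
  map_one' := congrArg AlgHom.toLinearMap (OSperm_one n)
  map_mul' σ τ := congrArg AlgHom.toLinearMap (OSperm_mul σ.1 τ.1)

theorem toSubmodule_OSinv (n : ℕ) : Subalgebra.toSubmodule (OSinv n) = (OSrep n).invariants :=
  Submodule.ext fun _ => ⟨fun h σ => h σ.1 σ.2, fun h σ hσ => h ⟨σ, hσ⟩⟩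

theorem inf_invariants_le_span_averageMap {k G V : Type*} [CommRing k] [Group G] [Fintype G]
    [Invertible (Fintype.card G : k)] [AddCommGroup V] [Module k V] (ρ : Representation k G V)
    {W : Submodule k V} {v : V} (hW : W ≤ Submodule.span k (Set.range (ρ · v))) :
    W ⊓ ρ.invariants ≤ Submodule.span k {ρ.averageMap v} := by
  have havg (g : G) : ρ.averageMap (ρ g v) = ρ.averageMap v := by
    rw [Representation.averageMap, ← Representation.asAlgebraHom_single_one,
      ← Module.End.mul_apply, ← map_mul, GroupAlgebra.mul_average_right]
  rintro x ⟨hxW, hx⟩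
  rw [← ρ.averageMap_id x hx]
  have hmem := Submodule.mem_map_of_mem (f := ρ.averageMap) (hW hxW)
  rw [Submodule.map_span] at hmem
  refine Submodule.span_mono ?_ hmem
  rintro _ ⟨_, ⟨g, rfl⟩, rfl⟩
  exact havg g

theorem exists_map_eq_of_perm_of_mem {α : Type*} {l l' : List α} (hl : l.Nodup)
    (hmem : ∀ x, x ∈ l) (h : l'.Perm l) : ∃ σ : Equiv.Perm α, l.map σ = l' := by
  classical
  have hlen := h.length_eq
  let e := hl.getEquivOfForallMemList l hmem
  let e' := (h.nodup_iff.2 hl).getEquivOfForallMemList l' fun x => h.mem_iff.2 (hmem x)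
  refine ⟨e.symm.trans ((finCongr hlen.symm).trans e'), List.ext_getElem ?_ fun i hi hi' => ?_⟩
  · rw [List.length_map, hlen]
  · have hei : e.symm l[i] = ⟨i, by simpa using hi⟩ := e.symm_apply_eq.2 rfl
    simp [hei, e']

theorem pathSpan_le_span_range_OSrep {n : ℕ} {l : List (Fin (n + 1))} (hl : (Fin.last n :: l).Nodup)
    (hmem : ∀ x, x ∈ Fin.last n :: l) :
    pathSpan n (Fin.last n) l ≤
      Submodule.span ℚ (Set.range (OSrep n · (pathOS n (Fin.last n) l))) := by
  refine Submodule.span_mono ?_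
  rintro _ ⟨l', hl', rfl⟩
  obtain ⟨σ, hσ⟩ := exists_map_eq_of_perm_of_mem hl hmem (hl'.cons _)
  obtain ⟨hlast, rfl⟩ := List.cons_eq_cons.1 hσ
  refine ⟨⟨σ, hlast⟩, ?_⟩
  exact (OSperm_pathOS σ _ l).trans (by rw [hlast])

theorem exists_list_last_cons_nodup (n : ℕ) : ∃ l : List (Fin (n + 1)),
    l.length = n ∧ (Fin.last n :: l).Nodup ∧ ∀ x, x ∈ Fin.last n :: l := by
  refine ⟨(List.finRange n).map Fin.castSucc, by simp, ?_, fun x => ?_⟩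
  · simpa [Fin.castSucc_ne_last] using (List.nodup_finRange n).map (Fin.castSucc_injective n)
  · induction x using Fin.lastCases <;> simp

theorem OSdeg_eq_bot_of_lt {n k : ℕ} (h : n < k) : OSdeg n k = ⊥ := by
  obtain ⟨l, hlen, -, hmem⟩ := exists_list_last_cons_nodup n
  have huniv : {v | v ∈ Fin.last n :: l} = Set.univ := Set.eq_univ_of_forall hmem
  have hzero := genSpan_pow_succ_length_eq_zero (Fin.last n) l
  rw [hlen, huniv] at hzero
  exact le_bot_iff.1 ((OSdeg_le_genSpan_univ_pow n k).trans (pow_eq_zero_of_le h hzero).le)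

theorem exists_OSinvDeg_self_le_span_singleton (n : ℕ) :
    ∃ v, OSinvDeg n n ≤ Submodule.span ℚ {v} := by
  obtain ⟨l, hlen, hl, hmem⟩ := exists_list_last_cons_nodup n
  have huniv : {v | v ∈ Fin.last n :: l} = Set.univ := Set.eq_univ_of_forall hmem
  have hpath := genSpan_pow_length_le_pathSpan (Fin.last n) l
  rw [hlen, huniv] at hpath
  rw [OSinvDeg, toSubmodule_OSinv, inf_comm]
  exact ⟨_, inf_invariants_le_span_averageMap (OSrep n) ((OSdeg_le_genSpan_univ_pow n n).trans
    (hpath.trans (pathSpan_le_span_range_OSrep hl hmem)))⟩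

theorem finrank_OSinvDeg_le_one {n k : ℕ} (h : n ≤ k) : Module.finrank ℚ (OSinvDeg n k) ≤ 1 := by
  obtain rfl | hlt := h.eq_or_lt
  · obtain ⟨v, hv⟩ := exists_OSinvDeg_self_le_span_singleton n
    exact (Submodule.finrank_mono hv).trans ((finrank_span_le_card _).trans (by simp))
  · rw [OSinvDeg, OSdeg_eq_bot_of_lt hlt, inf_bot_eq, finrank_bot]
    exact zero_le_one

end Invariants

end OrlikSolomon

theorem consecutive_degree_LI_odd_general (n d : ℕ)
    (h : 2 ≤ Module.finrank ℚ (OSinvDeg n (2 * d + 1))) :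
    LinearIndependent ℚ ![aOS n * cOS n ^ d, mOS n * cOS n ^ d] := by
  have hlt : 2 * d + 1 < n := by
    by_contra! hle
    have := OrlikSolomon.finrank_OSinvDeg_le_one hle
    omega
  exact OrlikSolomon.linearIndependent_aOS_mul_cOS_pow_mOS_mul_cOS_pow hlt

/-- Let `n ≥ 2` with `n ≠ 3` and let `d ≥ 1`. If `{a·m·c^{d−1}, cᵈ}` is
linearly independent and `dim (OS_n^{S_n})_{2d+1} ≥ 2`, then `{a·cᵈ, m·cᵈ}` is linearly
independent. -/
theorem consecutive_degree_LI_odd (n : ℕ) (hn : 2 ≤ n) (hn3 : n ≠ 3) (d : ℕ) (hd : 1 ≤ d)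
    (h1 : LinearIndependent ℚ ![aOS n * mOS n * cOS n ^ (d-1), cOS n ^ d])
    (h2 : 2 ≤ Module.finrank ℚ (OSinvDeg n (2*d+1))) :
    LinearIndependent ℚ ![aOS n * cOS n ^ d, mOS n * cOS n ^ d] :=
  consecutive_degree_LI_odd_general n d h2

end
end
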